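/- arXiv:2405.19742 — 6 statements merged into one kernel-verified Lean document; each statement's English description precedes it below -/
import Mathlib

section
/- Let H > 0 and B ∈ (0,1) ∪ (1,∞). Set c = (B²−1)/(6B), l = (B²−1) − 2Bc + (B²−1)c² − 2Bc³, m = 2B − 2c(B²−1) + 6Bc², n = 2B, and assume 4m³ + 27·n·l² ≠ 0. Let G(s) = B² + 2B·sinh(2Hs) − 1, let I = {s ∈ ℝ : G(s) > 0}, fix a basepoint s₁ ∈ I, and define on I the functions x(s) = (1/(2H))·√(G(s)) and z(s) = ∫_{s₁}^{s} (B·sinh(2Ht) − 1)/√(G(t)) dt. Then the spacelike CMC surface of revolution about the timelike z-axis, S = {(x(s)·cos θ, x(s)·sin θ, z(s)) : s ∈ I, θ ∈ ℝ} ⊆ ℝ³, is not algebraic. -/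
namespace CmcAux

open Polynomial Filter Topology

noncomputable def cmcQ (B : ℝ) : ℝ[X] := (X ^ 2 - C (B ^ 2 - 1)) ^ 2 + C (4 * B ^ 2)

noncomputable def cmcN (B H : ℝ) : ℝ[X] := C (1 / (2 * H)) * (X ^ 2 - C (B ^ 2 + 1))

theorem cmcQ_eval (B w : ℝ) : (cmcQ B).eval w = (w ^ 2 - (B ^ 2 - 1)) ^ 2 + 4 * B ^ 2 := by
  simp [cmcQ]

theorem cmcQ_pos {B : ℝ} (hB : 0 < B) (w : ℝ) : 0 < (cmcQ B).eval w := by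
  rw [cmcQ_eval]; positivity

theorem cmcQ_deriv (B : ℝ) : derivative (cmcQ B) = C 4 * (X * (X ^ 2 - C (B ^ 2 - 1))) := by
  have : (C 4 : ℝ[X]) = 4 := rfl
  have h2 : (C 2 : ℝ[X]) = 2 := rfl
  rw [this]
  simp [cmcQ, derivative_pow, h2]
  ring

theorem cmcQ_sep {B : ℝ} (hB : 0 < B) : (cmcQ B).Separable := by
  unfold Polynomial.Separable
  rw [cmcQ_deriv]
  refine IsCoprime.mul_right ?_ (IsCoprime.mul_right ?_ ?_)
  · exact (isCoprime_one_right).of_isCoprime_of_dvd_right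
      (isUnit_iff_dvd_one.1 (isUnit_C.2 (by norm_num)))
  · refine ⟨C (1 / (B ^ 2 + 1) ^ 2), -C (1 / (B ^ 2 + 1) ^ 2) * (X ^ 3 - C (2 * (B ^ 2 - 1)) * X), ?_⟩
    apply Polynomial.funext
    intro w
    simp [cmcQ]
    field_simp
    ring
  · refine ⟨C (1 / (4 * B ^ 2)), -C (1 / (4 * B ^ 2)) * (X ^ 2 - C (B ^ 2 - 1)), ?_⟩
    apply Polynomial.funext
    intro w
    simp [cmcQ]
    field_simp
    ring

theorem cmcQ_monicdeg (B : ℝ) : (cmcQ B).natDegree = 4 ∧ (cmcQ B).coeff 4 = 1 := by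
  have h : (cmcQ B).natDegree = 4 := by unfold cmcQ; compute_degree!
  refine ⟨h, ?_⟩
  unfold cmcQ
  have := (monic_X_pow_sub_C (B ^ 2 - 1) (two_ne_zero)).pow 2
  have h2 : ((X ^ 2 - C (B ^ 2 - 1)) ^ 2 : ℝ[X]).natDegree = 4 := by compute_degree!
  rw [coeff_add, coeff_C]
  rw [Polynomial.Monic, Polynomial.leadingCoeff, h2] at this
  simpa using this

theorem cmc_nonsq {B : ℝ} (hB : 0 < B) {a b : ℝ[X]} (h : a ^ 2 = b ^ 2 * cmcQ B) :
    a = 0 ∧ b = 0 := by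
  have hb : b = 0 := by
    by_contra hb
    have hd : b ∣ a := (IsIntegrallyClosed.pow_dvd_pow_iff (two_ne_zero)).1 ⟨_, h⟩
    obtain ⟨c, rfl⟩ := hd
    have hc : c ^ 2 = cmcQ B := by
      have : b ^ 2 * (c ^ 2) = b ^ 2 * cmcQ B := by rw [← h]; ring
      exact mul_left_cancel₀ (pow_ne_zero 2 hb) this
    have hu : IsUnit c := (cmcQ_sep hB).squarefree c ⟨1, by rw [← hc]; ring⟩
    have h0 := natDegree_eq_zero_of_isUnit (hu.pow 2)
    rw [hc, (cmcQ_monicdeg B).1] at h0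
    omega
  subst hb
  refine ⟨?_, rfl⟩
  simpa using h

theorem cmc_step1 {B : ℝ} {b p π : ℝ[X]} (hp : p ≠ 0)
    (hcop : IsCoprime b p) (hπ : Irreducible π) (hdiv : π ∣ p) (hB : 0 < B) (N : ℝ[X])
    (h : 2 * (derivative b * p - b * derivative p) * cmcQ B + b * p * derivative (cmcQ B)
      + N * p ^ 2 = 0) : False := by
  have hprime : Prime π := hπ.prime
  obtain ⟨k, r, hr, hpk⟩ : ∃ k r, ¬ π ∣ r ∧ p = π ^ k * r := by
    obtain ⟨r, h1, h2⟩ :=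
      (FiniteMultiplicity.of_prime_left hprime hp).exists_eq_pow_mul_and_not_dvd
    exact ⟨_, r, h2, h1⟩
  have hk : k ≠ 0 := by
    rintro rfl
    apply hr; simpa [hpk] using hdiv
  obtain ⟨j, rfl⟩ := Nat.exists_eq_succ_of_ne_zero hk
  have hb : ¬ π ∣ b := by
    intro hbd
    exact hπ.not_isUnit (hcop.isUnit_of_dvd' hbd hdiv)
  have hd : ¬ π ∣ derivative π := by
    intro hbd
    exact hπ.not_isUnit (hπ.separable.isUnit_of_dvd' dvd_rfl hbd)
  have hC : ∀ x : ℝ, x ≠ 0 → ¬ π ∣ C x := fun x hx hbd =>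
    hπ.not_isUnit (isUnit_of_dvd_unit hbd (isUnit_C.2 (isUnit_iff_ne_zero.2 hx)))
  have hp' : derivative p = C ((j:ℝ) + 1) * π ^ j * derivative π * r + π ^ (j+1) * derivative r := by
    rw [hpk, derivative_mul, derivative_pow]; simp
  have hpj : π ^ j ≠ 0 := pow_ne_zero _ hprime.ne_zero
  have h1 : π ∣ C (2 * ((j:ℝ) + 1)) * b * derivative π * r * cmcQ B := by
    refine ⟨2 * derivative b * r * cmcQ B - 2 * b * derivative r * cmcQ B
      + b * r * derivative (cmcQ B) + N * r * p, ?_⟩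
    apply mul_left_cancel₀ hpj
    rw [hp'] at h
    rw [C_mul, show (C 2 : ℝ[X]) = 2 from rfl]
    have e : p = π ^ j * π * r := by rw [hpk, pow_succ]
    rw [e] at h ⊢
    linear_combination (-1 : ℝ[X]) * h
  have hj : (2 * ((j:ℝ) + 1)) ≠ 0 := by positivity
  have hQ : π ∣ cmcQ B := by
    rcases hprime.dvd_or_dvd h1 with h1 | h1
    · rcases hprime.dvd_or_dvd h1 with h1 | h1
      · rcases hprime.dvd_or_dvd h1 with h1 | h1
        · rcases hprime.dvd_or_dvd h1 with h1 | h1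
          · exact absurd h1 (hC _ hj)
          · exact absurd h1 hb
        · exact absurd h1 hd
      · exact absurd h1 hr
    · exact h1
  obtain ⟨Q1, hQ1⟩ := hQ
  have hsf : ¬ π ∣ Q1 := by
    rintro ⟨t, ht⟩
    exact hπ.not_isUnit ((cmcQ_sep hB).squarefree π ⟨t, by rw [hQ1, ht]; ring⟩)
  have h2 : π ∣ C (2 * ((j:ℝ) + 1) - 1) * b * derivative π * r * Q1 := by
    refine ⟨2 * derivative b * r * Q1 - 2 * b * derivative r * Q1
      + b * r * derivative Q1 + N * r ^ 2 * π ^ j, ?_⟩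
    apply mul_left_cancel₀ (mul_ne_zero hpj hprime.ne_zero)
    rw [hp', hQ1, derivative_mul] at h
    rw [C_sub, C_mul, show (C 2 : ℝ[X]) = 2 from rfl, C_1]
    have e : p = π ^ j * π * r := by rw [hpk, pow_succ]
    rw [e] at h
    linear_combination (-1 : ℝ[X]) * h
  have hj : (2 * ((j:ℝ) + 1) - 1) ≠ 0 := by
    have : (0:ℝ) ≤ j := by positivity
    intro h; linarith
  rcases hprime.dvd_or_dvd h2 with h1 | h1
  · rcases hprime.dvd_or_dvd h1 with h1 | h1
    · rcases hprime.dvd_or_dvd h1 with h1 | h1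
      · rcases hprime.dvd_or_dvd h1 with h1 | h1
        · exact absurd h1 (hC _ hj)
        · exact absurd h1 hb
      · exact absurd h1 hd
    · exact absurd h1 hr
  · exact hsf h1

theorem cmc_poly {B : ℝ} (hB : 0 < B) {b p N : ℝ[X]} (hp : p ≠ 0) (hN : N ≠ 0)
    (hNd : N.natDegree ≤ 2)
    (h : 2 * (derivative b * p - b * derivative p) * cmcQ B + b * p * derivative (cmcQ B)
      + N * p ^ 2 = 0) : False := by
  obtain ⟨b1, p1, hcop, e⟩ : ∃ b1 p1 : ℝ[X], IsCoprime b1 p1 ∧ ∃ g, b = g * b1 ∧ p = g * p1 := by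
    obtain ⟨b1, hb1⟩ := EuclideanDomain.gcd_dvd_left b p
    obtain ⟨p1, hp1⟩ := EuclideanDomain.gcd_dvd_right b p
    refine ⟨b1, p1, ?_, _, hb1, hp1⟩
    have hg : EuclideanDomain.gcd b p ≠ 0 := by
      intro h0; rw [h0] at hp1; simp at hp1; exact hp hp1
    have hbez := EuclideanDomain.gcd_eq_gcd_ab b p
    refine ⟨EuclideanDomain.gcdA b p, EuclideanDomain.gcdB b p, ?_⟩
    apply mul_left_cancel₀ hg
    calc _ = (EuclideanDomain.gcd b p * b1) * EuclideanDomain.gcdA b p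
            + (EuclideanDomain.gcd b p * p1) * EuclideanDomain.gcdB b p := by ring
      _ = _ := by rw [← hb1, ← hp1, ← hbez, mul_one]
  obtain ⟨g, rfl, rfl⟩ := e
  have hg : g ≠ 0 := left_ne_zero_of_mul hp
  have hp1 : p1 ≠ 0 := right_ne_zero_of_mul hp
  have h' : 2 * (derivative b1 * p1 - b1 * derivative p1) * cmcQ B
      + b1 * p1 * derivative (cmcQ B) + N * p1 ^ 2 = 0 := by
    apply mul_left_cancel₀ (pow_ne_zero 2 hg)
    rw [derivative_mul, derivative_mul] at h
    linear_combination h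
  have hu : IsUnit p1 := by
    by_contra hnu
    obtain ⟨π, hπ, hd⟩ := WfDvdMonoid.exists_irreducible_factor hnu hp1
    exact cmc_step1 hp1 hcop hπ hd hB N h'
  obtain ⟨c, hc, rfl⟩ := Polynomial.isUnit_iff.1 hu
  have hc0 : c ≠ 0 := hc.ne_zero
  have h3 : 2 * (derivative b1) * cmcQ B
      + b1 * derivative (cmcQ B) + N * C c = 0 := by
    apply mul_left_cancel₀ hp1
    rw [derivative_C] at h'
    linear_combination h'
  by_cases hb0 : b1 = 0
  · subst hb0
    simp at h3
    tauto
  set e := b1.natDegree with he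
  have h4 : C 2 * ((X * derivative b1) * cmcQ B) + b1 * (X * derivative (cmcQ B)) + C c * (X * N) = 0 := by
    rw [show (C 2 : ℝ[X]) = 2 from rfl]
    linear_combination X * h3
  have h5 := congrArg (fun q : ℝ[X] => q.coeff (e + 4)) h4
  obtain ⟨hQ4, hQc⟩ := cmcQ_monicdeg B
  have xd : ∀ q : ℝ[X], (X * derivative q).natDegree ≤ q.natDegree ∧
      (X * derivative q).coeff q.natDegree = q.natDegree * q.coeff q.natDegree := by
    intro q
    have hh : ∀ n, (X * derivative q).coeff n = n * q.coeff n := by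
      intro n
      cases n with
      | zero => simp
      | succ n => rw [coeff_X_mul, coeff_derivative]; push_cast; ring
    refine ⟨?_, hh _⟩
    rw [natDegree_le_iff_coeff_eq_zero]
    intro n hn
    rw [hh, coeff_eq_zero_of_natDegree_lt hn, mul_zero]
  simp only [coeff_add, coeff_C_mul, coeff_zero] at h5
  rw [coeff_mul_add_eq_of_natDegree_le (xd b1).1 hQ4.le,
    coeff_mul_add_eq_of_natDegree_le he.ge ((xd (cmcQ B)).1.trans hQ4.le), (xd b1).2] at h5
  have h6 := (xd (cmcQ B)).2
  rw [hQ4, hQc] at h6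
  rw [h6, hQc, coeff_X_mul, coeff_eq_zero_of_natDegree_lt (p := N) (by omega)] at h5
  have hl : b1.coeff b1.natDegree ≠ 0 := by
    simpa using hb0
  have : b1.coeff b1.natDegree * (2 * (e:ℝ) + 4) = 0 := by
    push_cast at h5
    simp only [he]; linear_combination h5
  rcases mul_eq_zero.1 this with h | h
  · exact hl h
  · have : (0:ℝ) ≤ e := by positivity
    linarith

noncomputable def cmcY (B w : ℝ) : ℝ := Real.sqrt ((cmcQ B).eval w)

theorem cmcY_sq {B : ℝ} (hB : 0 < B) (w : ℝ) : cmcY B w ^ 2 = (cmcQ B).eval w :=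
  Real.sq_sqrt (cmcQ_pos hB w).le

theorem cmcY_pos {B : ℝ} (hB : 0 < B) (w : ℝ) : 0 < cmcY B w := Real.sqrt_pos.2 (cmcQ_pos hB w)

theorem cmcY_deriv {B : ℝ} (hB : 0 < B) (w : ℝ) :
    HasDerivAt (cmcY B) ((derivative (cmcQ B)).eval w / (2 * cmcY B w)) w :=
  ((cmcQ B).hasDerivAt w).sqrt (cmcQ_pos hB w).ne'

/-- Germs at infinity of elements of the function field `ℝ(w, y)`. -/
def cmcK (B : ℝ) (f : ℝ → ℝ) : Prop := ∃ a b p : ℝ[X], p ≠ 0 ∧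
  ∀ᶠ w in atTop, f w = (a.eval w + b.eval w * cmcY B w) / p.eval w

theorem ev_ne {p : ℝ[X]} (hp : p ≠ 0) : ∀ᶠ w in atTop, p.eval w ≠ 0 :=
  Polynomial.eventually_atTop_not_isRoot p hp

theorem ev_zero {p : ℝ[X]} (hp : ∀ᶠ w in atTop, p.eval w = 0) : p = 0 := by
  by_contra h
  obtain ⟨w, h1, h2⟩ := (hp.and (ev_ne h)).exists
  exact h2 h1

theorem cmc_indep {B : ℝ} (hB : 0 < B) {a b : ℝ[X]}
    (h : ∀ᶠ w in atTop, a.eval w + b.eval w * cmcY B w = 0) : a = 0 ∧ b = 0 := by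
  apply cmc_nonsq hB
  rw [← sub_eq_zero]
  apply ev_zero
  filter_upwards [h] with w hw
  simp only [eval_sub, eval_mul, eval_pow]
  rw [← cmcY_sq hB]
  linear_combination (a.eval w - b.eval w * cmcY B w) * hw

theorem cmcK_poly (B : ℝ) (a : ℝ[X]) : cmcK B (fun w => a.eval w) :=
  ⟨a, 0, 1, one_ne_zero, by simp⟩

theorem cmcK_add {B : ℝ} {f g : ℝ → ℝ} (hf : cmcK B f) (hg : cmcK B g) :
    cmcK B (fun w => f w + g w) := by
  obtain ⟨a, b, p, hp, h⟩ := hf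
  obtain ⟨a', b', p', hp', h'⟩ := hg
  refine ⟨a * p' + a' * p, b * p' + b' * p, p * p', mul_ne_zero hp hp', ?_⟩
  filter_upwards [h, h', ev_ne hp, ev_ne hp'] with w h1 h2 h3 h4
  rw [h1, h2]
  simp only [eval_add, eval_mul]
  field_simp
  ring

theorem cmcK_mul {B : ℝ} (hB : 0 < B) {f g : ℝ → ℝ} (hf : cmcK B f) (hg : cmcK B g) :
    cmcK B (fun w => f w * g w) := by
  obtain ⟨a, b, p, hp, h⟩ := hf
  obtain ⟨a', b', p', hp', h'⟩ := hg
  refine ⟨a * a' + b * b' * cmcQ B, a * b' + b * a', p * p', mul_ne_zero hp hp', ?_⟩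
  filter_upwards [h, h', ev_ne hp, ev_ne hp'] with w h1 h2 h3 h4
  rw [h1, h2]
  simp only [eval_add, eval_mul]
  rw [← cmcY_sq hB]
  field_simp
  ring

theorem cmcK_inv {B : ℝ} (hB : 0 < B) {f : ℝ → ℝ} (hf : cmcK B f) 
    (hne : ¬ ∀ᶠ w in atTop, f w = 0) :
    cmcK B (fun w => (f w)⁻¹) ∧ ∀ᶠ w in atTop, f w ≠ 0 := by
  obtain ⟨a, b, p, hp, h⟩ := hf
  have hn : a ^ 2 - b ^ 2 * cmcQ B ≠ 0 := by
    intro h0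
    obtain ⟨rfl, rfl⟩ := cmc_nonsq hB (sub_eq_zero.1 h0)
    apply hne
    filter_upwards [h] with w hw
    simp [hw]
  have key : ∀ᶠ w in atTop, f w = (a.eval w + b.eval w * cmcY B w) / p.eval w ∧ p.eval w ≠ 0 ∧
      a.eval w + b.eval w * cmcY B w ≠ 0 ∧ a.eval w - b.eval w * cmcY B w ≠ 0 := by
    filter_upwards [h, ev_ne hp, ev_ne hn] with w h1 h2 h3
    simp only [eval_sub, eval_mul, eval_pow] at h3
    rw [← cmcY_sq hB] at h3
    have : (a.eval w + b.eval w * cmcY B w) * (a.eval w - b.eval w * cmcY B w) ≠ 0 := by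
      convert h3 using 1; ring
    exact ⟨h1, h2, left_ne_zero_of_mul this, right_ne_zero_of_mul this⟩
  constructor
  · refine ⟨p * a, -(p * b), _, hn, ?_⟩
    filter_upwards [key] with w ⟨h1, h2, h3, h4⟩
    simp only [eval_sub, eval_mul, eval_pow, eval_neg]
    rw [← cmcY_sq hB, h1]
    have e : a.eval w ^ 2 - b.eval w ^ 2 * cmcY B w ^ 2 =
      (a.eval w + b.eval w * cmcY B w) * (a.eval w - b.eval w * cmcY B w) := by ring
    rw [e, inv_div, div_eq_div_iff h3 (mul_ne_zero h3 h4)]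
    ring
  · filter_upwards [key] with w ⟨h1, h2, h3, h4⟩
    rw [h1]
    exact div_ne_zero h3 h2

theorem ev_nhds {P : ℝ → Prop} (h : ∀ᶠ w in atTop, P w) : ∀ᶠ w in atTop, ∀ᶠ v in 𝓝 w, P v := by
  obtain ⟨A, hA⟩ := eventually_atTop.1 h
  filter_upwards [eventually_gt_atTop A] with w hw
  filter_upwards [Ioi_mem_nhds hw] with v hv
  exact hA v (le_of_lt hv)

theorem cmcK_deriv {B : ℝ} (hB : 0 < B) {f : ℝ → ℝ} {a b p : ℝ[X]} (hp : p ≠ 0)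
    (h : ∀ᶠ w in atTop, f w = (a.eval w + b.eval w * cmcY B w) / p.eval w) :
    ∀ᶠ w in atTop, HasDerivAt f
     (((2 * (derivative b * p - b * derivative p) * cmcQ B
       + b * p * derivative (cmcQ B)).eval w + (2 * (derivative a * p - a * derivative p)).eval w
        * cmcY B w) / (2 * p.eval w ^ 2 * cmcY B w)) w := by
  filter_upwards [ev_nhds h, ev_ne hp] with w h1 h2
  have hy := cmcY_pos hB w
  have e := (((a.hasDerivAt w).add ((b.hasDerivAt w).mul (cmcY_deriv hB w))).div
    (p.hasDerivAt w) h2).congr_of_eventuallyEq h1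
  refine HasDerivAt.congr_deriv e (Eq.symm ?_)
  simp only [eval_add, eval_mul, eval_sub, Pi.mul_apply, Pi.add_apply, eval_ofNat]
  rw [← cmcY_sq hB]
  field_simp
  ring

theorem cmcK_deriv' {B : ℝ} (hB : 0 < B) {f : ℝ → ℝ} (hf : cmcK B f) :
    ∃ g, cmcK B g ∧ ∀ᶠ w in atTop, HasDerivAt f (g w) w := by
  obtain ⟨a, b, p, hp, h⟩ := hf
  refine ⟨_, ?_, cmcK_deriv hB hp h⟩
  have hQ : cmcQ B ≠ 0 := fun h0 => by
    have := cmcQ_pos hB 0; rw [h0] at this; simp at this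
  refine ⟨(2 * (derivative a * p - a * derivative p)) * cmcQ B,
    2 * (derivative b * p - b * derivative p) * cmcQ B
       + b * p * derivative (cmcQ B), 2 * p ^ 2 * cmcQ B, by simp [hp, hQ], ?_⟩
  filter_upwards [ev_ne hp] with w h2
  have hy := cmcY_pos hB w
  generalize (2 * (derivative b * p - b * derivative p) * cmcQ B
       + b * p * derivative (cmcQ B)) = u
  generalize (2 * (derivative a * p - a * derivative p)) = v
  simp only [eval_mul, eval_pow]
  rw [← cmcY_sq hB]
  simp
  field_simp
  ring

theorem cmcN_ne {B H : ℝ} (hH : 0 < H) : cmcN B H ≠ 0 := by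
  unfold cmcN
  refine mul_ne_zero (C_ne_zero.2 (by positivity)) (X_pow_sub_C_ne_zero (by norm_num) _)

theorem cmc_main {B H : ℝ} (hB : 0 < B) (hH : 0 < H) (z : ℝ → ℝ)
    (hz : ∀ᶠ w in atTop, HasDerivAt z ((cmcN B H).eval w / cmcY B w) w) (d : ℕ) :
    ∀ a : ℕ → ℝ → ℝ, (∀ i, cmcK B (a i)) → (∀ᶠ w in atTop, a d w = 1) →
    ¬ (∀ᶠ w in atTop, ∑ i ∈ Finset.range (d + 1), a i w * z w ^ i = 0) := by
  have hQ : cmcQ B ≠ 0 := fun h0 => by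
    have := cmcQ_pos hB 0; rw [h0] at this; simp at this
  induction d with
  | zero =>
    intro a _ h1 h2
    obtain ⟨w, h1, h2⟩ := (h1.and h2).exists
    simp [h1] at h2
  | succ d ih =>
    intro a hK h1 h2
    choose g hg hga using fun i => cmcK_deriv' hB (hK i)
    set z' : ℝ → ℝ := fun w => (cmcN B H).eval w / cmcY B w with hz'
    have hz'K : cmcK B z' := by
      refine ⟨0, cmcN B H, cmcQ B, hQ, Eventually.of_forall fun w => ?_⟩
      have hy := cmcY_pos hB w
      rw [← cmcY_sq hB]
      simp [hz']
      field_simp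
    have hgtop : ∀ᶠ w in atTop, g (d + 1) w = 0 := by
      filter_upwards [ev_nhds h1, hga (d + 1)] with w e1 e2
      exact e2.unique ((hasDerivAt_const w (1:ℝ)).congr_of_eventuallyEq e1)
    have hall : ∀ᶠ w in atTop, ∀ i ∈ Finset.range (d + 1 + 1), HasDerivAt (a i) (g i w) w := by
      rw [Finset.eventually_all]
      intro i _; exact hga i
    set c : ℕ → ℝ → ℝ := fun i w => g i w + (((i:ℝ) + 1) * a (i + 1) w) * z' w with hc
    have hcK : ∀ i, cmcK B (c i) := by
      intro i
      have := cmcK_poly B (C ((i:ℝ) + 1))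
      simp only [eval_C] at this
      exact cmcK_add (hg i) (cmcK_mul hB (cmcK_mul hB this (hK (i + 1))) hz'K)
    have hrel : ∀ᶠ w in atTop, ∑ i ∈ Finset.range (d + 1), c i w * z w ^ i = 0 := by
      filter_upwards [ev_nhds h2, hall, hz, hgtop] with w e1 e2 e3 e4
      have D1 : HasDerivAt (fun w => ∑ i ∈ Finset.range (d + 1 + 1), a i w * z w ^ i)
          (∑ i ∈ Finset.range (d + 1 + 1), (g i w * z w ^ i + a i w * (i * z w ^ (i - 1) * z' w))) w :=
        HasDerivAt.fun_sum fun i hi => (e2 i hi).mul (e3.pow i)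
      have D2 := D1.unique ((hasDerivAt_const w (0:ℝ)).congr_of_eventuallyEq e1)
      rw [Finset.sum_add_distrib, Finset.sum_range_succ, e4, Finset.sum_range_succ' _ (d + 1)] at D2
      simp only [Nat.add_sub_cancel, Nat.cast_zero, zero_mul, mul_zero, add_zero] at D2
      rw [← D2, ← Finset.sum_add_distrib]
      refine Finset.sum_congr rfl fun i _ => ?_
      simp only [hc]; push_cast; ring
    have hne : ¬ ∀ᶠ w in atTop, c d w = 0 := by
      intro h0
      obtain ⟨α, b, p, hp, hf⟩ := hK d
      have hD := cmcK_deriv hB hp hf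
      have key : ∀ᶠ w in atTop, ((2 * (derivative b * p - b * derivative p) * cmcQ B
         + b * p * derivative (cmcQ B)) + (C (2 * ((d:ℝ) + 1)) * cmcN B H) * p ^ 2).eval w
         + (2 * (derivative α * p - α * derivative p)).eval w * cmcY B w = 0 := by
        filter_upwards [h0, hD, hga d, h1, ev_ne hp] with w e0 e1 e2 e3 e4
        have e5 := e2.unique e1
        simp only [hc, hz'] at e0
        rw [e5, e3] at e0
        have hy := cmcY_pos hB w
        rw [eval_add]
        generalize (2 * (derivative b * p - b * derivative p) * cmcQ B
           + b * p * derivative (cmcQ B)).eval w = u at *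
        generalize (2 * (derivative α * p - α * derivative p)).eval w = v at *
        simp only [eval_mul, eval_pow, eval_C]
        field_simp at e0
        linear_combination e0
      have h3 := (cmc_indep hB key).1
      refine cmc_poly hB hp (mul_ne_zero (C_ne_zero.2 (by positivity)) (cmcN_ne hH)) ?_ h3
      unfold cmcN
      compute_degree
    obtain ⟨hinv, hne'⟩ := cmcK_inv hB (hcK d) hne
    refine ih (fun i w => c i w * (c d w)⁻¹) (fun i => cmcK_mul hB (hcK i) hinv) ?_ ?_
    · filter_upwards [hne'] with w hw
      exact mul_inv_cancel₀ hw
    · filter_upwards [hrel] with w hw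
      have : ∑ i ∈ Finset.range (d + 1), c i w * (c d w)⁻¹ * z w ^ i =
          (∑ i ∈ Finset.range (d + 1), c i w * z w ^ i) * (c d w)⁻¹ := by
        rw [Finset.sum_mul]
        exact Finset.sum_congr rfl fun i _ => by ring
      rw [this, hw, zero_mul]

theorem cmc_biv {B H : ℝ} (hB : 0 < B) (hH : 0 < H) (z : ℝ → ℝ)
    (hz : ∀ᶠ w in atTop, HasDerivAt z ((cmcN B H).eval w / cmcY B w) w)
    (F : ℝ[X][X]) (hF : F ≠ 0)
    (h : ∀ᶠ w in atTop, (F.map (evalRingHom w)).eval (z w) = 0) : False := by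
  have hl : F.coeff F.natDegree ≠ 0 := by simpa using hF
  have hlK : cmcK B (fun w => ((F.coeff F.natDegree).eval w)⁻¹) :=
    ⟨1, 0, _, hl, by simp⟩
  refine cmc_main hB hH z hz F.natDegree
    (fun i w => (F.coeff i).eval w * ((F.coeff F.natDegree).eval w)⁻¹)
    (fun i => cmcK_mul hB (cmcK_poly B _) hlK) ?_ ?_
  · filter_upwards [ev_ne hl] with w hw
    exact mul_inv_cancel₀ hw
  · filter_upwards [h] with w hw
    rw [eval_map, eval₂_eq_sum_range] at hw
    have : ∑ i ∈ Finset.range (F.natDegree + 1),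
        (F.coeff i).eval w * ((F.coeff F.natDegree).eval w)⁻¹ * z w ^ i =
        (∑ i ∈ Finset.range (F.natDegree + 1), (evalRingHom w) (F.coeff i) * z w ^ i)
          * ((F.coeff F.natDegree).eval w)⁻¹ := by
      rw [Finset.sum_mul]
      exact Finset.sum_congr rfl fun i _ => by simp only [coe_evalRingHom]; ring
    rw [this, hw, zero_mul]

end CmcAux

open CmcAux in

/-- The spacelike CMC surface of revolution about the timelike z-axis in
Lorentz–Minkowski space `E₁³` (Kenmotsu-type parametrization, parameter `B ∈ (0,1) ∪ (1,∞)`,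
nonvanishing discriminant of the associated elliptic curve) is not algebraic. -/
theorem spacelike_cmc_revolution_timelike_axis_not_algebraic
    (H B : ℝ) (hH : 0 < H) (hB : B ∈ Set.Ioo (0:ℝ) 1 ∪ Set.Ioi (1:ℝ))
    (c l m n : ℝ)
    (hc : c = (B ^ 2 - 1) / (6 * B))
    (hl : l = (B ^ 2 - 1) - 2 * B * c + (B ^ 2 - 1) * c ^ 2 - 2 * B * c ^ 3)
    (hm : m = 2 * B - 2 * c * (B ^ 2 - 1) + 6 * B * c ^ 2)
    (hn : n = 2 * B)
    (hdisc : 4 * m ^ 3 + 27 * n * l ^ 2 ≠ 0)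
    (G : ℝ → ℝ) (hG : ∀ s, G s = B ^ 2 + 2 * B * Real.sinh (2 * H * s) - 1)
    (I : Set ℝ) (hI : I = {s : ℝ | 0 < G s})
    (s₁ : ℝ) (hs₁ : s₁ ∈ I)
    (x z : ℝ → ℝ)
    (hx : ∀ s ∈ I, x s = (1 / (2 * H)) * Real.sqrt (G s))
    (hz : ∀ s ∈ I, z s = ∫ t in s₁..s,
      (B * Real.sinh (2 * H * t) - 1) / Real.sqrt (G t))
    (S : Set (Fin 3 → ℝ))
    (hS : S = {p : Fin 3 → ℝ | ∃ s ∈ I, ∃ θ : ℝ,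
      p = ![x s * Real.cos θ, x s * Real.sin θ, z s]}) :
    ¬ ∃ P : MvPolynomial (Fin 3) ℝ, P ≠ 0 ∧ ∀ p ∈ S, MvPolynomial.eval p P = 0 := by
  have hB0 : 0 < B := by
    rcases hB with h | h
    · exact h.1
    · exact lt_trans one_pos h
  rintro ⟨P, hP0, hP⟩
  obtain ⟨θ, hθ⟩ : ∃ θ : ℝ, ∃ r ζ : ℝ, MvPolynomial.eval
      ![(1 / (2 * H)) * r * Real.cos θ, (1 / (2 * H)) * r * Real.sin θ, ζ] P ≠ 0 := by
    by_contra! hcon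
    apply hP0
    apply MvPolynomial.funext
    intro v
    have hc1 := Complex.norm_mul_cos_arg (⟨v 0, v 1⟩ : ℂ)
    have hs1 := Complex.norm_mul_sin_arg (⟨v 0, v 1⟩ : ℂ)
    have := hcon (Complex.arg ⟨v 0, v 1⟩) (2 * H * ‖(⟨v 0, v 1⟩ : ℂ)‖) (v 2)
    rw [map_zero, ← this]
    congr 1
    congr 1
    ext i
    fin_cases i
    · simp only [Fin.zero_eta, Matrix.cons_val_zero]
      refine hc1.symm.trans ?_
      field_simp
    · simp only [Fin.mk_one, Matrix.cons_val_one, Matrix.cons_val_zero]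
      refine hs1.symm.trans ?_
      field_simp
    · simp
  obtain ⟨r, ζ, hne⟩ := hθ
  set F : Polynomial (Polynomial ℝ) := MvPolynomial.aeval
    ![Polynomial.C (Polynomial.C ((1 / (2 * H)) * Real.cos θ) * Polynomial.X),
      Polynomial.C (Polynomial.C ((1 / (2 * H)) * Real.sin θ) * Polynomial.X),
      Polynomial.X] P with hFdef
  have hFeval : ∀ w y : ℝ, (F.map (Polynomial.evalRingHom w)).eval y =
      MvPolynomial.eval ![(1 / (2 * H)) * w * Real.cos θ, (1 / (2 * H)) * w * Real.sin θ, y] P := by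
    intro w y
    have key : ((Polynomial.evalRingHom y).comp
        (Polynomial.mapRingHom (Polynomial.evalRingHom w))).comp
        (MvPolynomial.aeval (R := ℝ)
    ![Polynomial.C (Polynomial.C ((1 / (2 * H)) * Real.cos θ) * Polynomial.X),
      Polynomial.C (Polynomial.C ((1 / (2 * H)) * Real.sin θ) * Polynomial.X),
      Polynomial.X]).toRingHom = MvPolynomial.eval
        ![(1 / (2 * H)) * w * Real.cos θ, (1 / (2 * H)) * w * Real.sin θ, y] := by
      apply MvPolynomial.ringHom_ext
      · intro t
        simp [Polynomial.algebraMap_apply]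
      · intro i
        fin_cases i
        · simp; ring
        · simp; ring
        · simp
    exact RingHom.congr_fun key P
  have hF0 : F ≠ 0 := by
    intro h0
    apply hne
    rw [← hFeval, h0]
    simp
  set σ : ℝ → ℝ := fun w => Real.arsinh ((w ^ 2 - (B ^ 2 - 1)) / (2 * B)) / (2 * H) with hσ
  have hsinh : ∀ w, Real.sinh (2 * H * σ w) = (w ^ 2 - (B ^ 2 - 1)) / (2 * B) := by
    intro w
    have : 2 * H * σ w = Real.arsinh ((w ^ 2 - (B ^ 2 - 1)) / (2 * B)) := by
      simp only [hσ]; field_simp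
    rw [this, Real.sinh_arsinh]
  have hGσ : ∀ w, G (σ w) = w ^ 2 := by
    intro w
    rw [hG, hsinh]; field_simp; ring
  have hσI : ∀ w, 0 < w → σ w ∈ I := by
    intro w hw
    rw [hI]
    show 0 < G (σ w)
    rw [hGσ]; positivity
  have hGmono : ∀ s t, s ≤ t → G s ≤ G t := by
    intro s t hst
    rw [hG, hG]
    have : Real.sinh (2 * H * s) ≤ Real.sinh (2 * H * t) :=
      Real.sinh_le_sinh.2 (by gcongr)
    have := mul_le_mul_of_nonneg_left this (by positivity : 0 ≤ 2 * B)
    linarith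
  have hGc : Continuous G := by
    have : G = fun s => B ^ 2 + 2 * B * Real.sinh (2 * H * s) - 1 := funext hG
    rw [this]
    exact ((continuous_const.add (continuous_const.mul
      (Real.continuous_sinh.comp (continuous_const.mul continuous_id)))).sub continuous_const)
  have hIo : IsOpen I := by
    rw [hI]; exact isOpen_lt continuous_const hGc
  set f : ℝ → ℝ := fun t => (B * Real.sinh (2 * H * t) - 1) / Real.sqrt (G t) with hf
  have hfc : ContinuousOn f I := by
    apply ContinuousOn.div
    · exact (((continuous_const.mul
      (Real.continuous_sinh.comp (continuous_const.mul continuous_id)))).sub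
        continuous_const).continuousOn
    · exact (Real.continuous_sqrt.comp hGc).continuousOn
    · intro t ht
      rw [hI] at ht
      exact (Real.sqrt_pos.2 ht).ne'
  have hsub : ∀ s ∈ I, Set.uIcc s₁ s ⊆ I := by
    intro s hs t ht
    rw [hI] at hs hs₁ ⊢
    have h1 : min s₁ s ≤ t := ht.1
    have h2 := hGmono _ _ h1
    have h3 : 0 < G (min s₁ s) := by
      rcases min_choice s₁ s with h | h <;> rw [h]
      · exact hs₁
      · exact hs
    exact lt_of_lt_of_le h3 h2
  have hzd : ∀ s ∈ I, HasDerivAt z (f s) s := by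
    intro s hs
    have h1 : HasDerivAt (fun u => ∫ t in s₁..u, f t) (f s) s :=
      intervalIntegral.integral_hasDerivAt_right
        ((hfc.mono (hsub s hs)).intervalIntegrable)
        (hfc.stronglyMeasurableAtFilter hIo s hs) (hfc.continuousAt (hIo.mem_nhds hs))
    apply h1.congr_of_eventuallyEq
    filter_upwards [hIo.mem_nhds hs] with u hu
    exact hz u hu
  refine cmc_biv hB0 hH (fun w => z (σ w)) ?_ F hF0 ?_
  · filter_upwards [Filter.eventually_gt_atTop 0] with w hw
    have hinner : HasDerivAt (fun w : ℝ => (w ^ 2 - (B ^ 2 - 1)) / (2 * B)) (w / B) w := by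
      have := (((hasDerivAt_id w).pow 2).sub_const (B ^ 2 - 1)).div_const (2 * B)
      refine HasDerivAt.congr_deriv this ?_
      simp
      field_simp
    have hσd : HasDerivAt σ _ w := (hinner.arsinh).div_const (2 * H)
    have h2 := (hzd (σ w) (hσI w hw)).comp w hσd
    refine HasDerivAt.congr_deriv h2 (Eq.symm ?_)
    have hy : cmcY B w = 2 * B * Real.sqrt (1 + ((w ^ 2 - (B ^ 2 - 1)) / (2 * B)) ^ 2) := by
      unfold cmcY
      rw [cmcQ_eval]
      rw [← Real.sqrt_sq (by positivity : 0 ≤ 2 * B), ← Real.sqrt_mul (by positivity)]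
      rw [Real.sqrt_sq (by positivity : 0 ≤ 2 * B)]
      congr 1
      field_simp
      ring
    simp only [hf]
    rw [hsinh, hGσ, Real.sqrt_sq hw.le, hy]
    have hp : 0 < Real.sqrt (1 + ((w ^ 2 - (B ^ 2 - 1)) / (2 * B)) ^ 2) :=
      Real.sqrt_pos.2 (by positivity)
    generalize Real.sqrt (1 + ((w ^ 2 - (B ^ 2 - 1)) / (2 * B)) ^ 2) = q at *
    simp [cmcN]
    field_simp
    ring
  · filter_upwards [Filter.eventually_gt_atTop 0] with w hw
    rw [hFeval]
    apply hP
    rw [hS]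
    refine ⟨σ w, hσI w hw, θ, ?_⟩
    rw [hx _ (hσI w hw), hGσ, Real.sqrt_sq hw.le]
end

section
/- Let H > 0 and B ∈ (0,1) ∪ (1,∞). Set c̃ = −(1+B²)/(6B), l̃ = −(B²+1) − 2B·c̃ + (B²+1)·c̃² + 2B·c̃³, m̃ = 2B − 2c̃(B²+1) − 6B·c̃², ñ = −2B, and assume 4m̃³ + 27·ñ·l̃² ≠ 0. Let F(s) = 1 + B² − 2B·cosh(2Hs), let I = {s ∈ ℝ : F(s) > 0} (a nonempty open interval containing 0), and define on I the functions z(s) = (1/(2H))·√(F(s)) and x(s) = ∫_{0}^{s} (B·cosh(2Ht) − 1)/√(F(t)) dt. Then the spacelike CMC surface of revolution about the spacelike x-axis, S = {(x(s), z(s)·sinh θ, z(s)·cosh θ) : s ∈ I, θ ∈ ℝ} ⊆ ℝ³, is not algebraic. -/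
lemma cmc_odd_primitive {R : ℝ} (hR : 0 < R) (φ : ℂ → ℂ)
    (hφ : DifferentiableOn ℂ φ (Metric.ball 0 R)) (he : ∀ w, φ (-w) = φ w) :
    ∃ G : ℂ → ℂ, G 0 = 0 ∧ (∀ w ∈ Metric.ball (0:ℂ) R, HasDerivAt G (φ w) w) ∧
      ∀ w ∈ Metric.ball (0:ℂ) R, G (-w) = -G w := by
  obtain ⟨G, h0, hG⟩ := hφ.isExactOn_ball.with_val_at 0 0
  refine ⟨G, h0, hG, ?_⟩
  have hd : ∀ w ∈ Metric.ball (0:ℂ) R, HasDerivAt (fun w => G (-w) + G w) 0 w := by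
    intro w hw
    have hw' : -w ∈ Metric.ball (0:ℂ) R := by simpa using hw
    have h1 := (hG _ hw').comp w (hasDerivAt_neg w)
    have h2 := h1.add (hG w hw)
    rw [he] at h2
    simpa using! h2
  obtain ⟨a, ha⟩ := (Metric.isOpen_ball (x := (0:ℂ)) (ε := R)).exists_is_const_of_deriv_eq_zero
    (convex_ball (0:ℂ) R).isPreconnected
    (fun w hw => (hd w hw).differentiableAt.differentiableWithinAt) (fun w hw => (hd w hw).deriv)
  have a0 : a = 0 := by
    have := ha 0 (by simpa using hR)
    simpa [h0] using this.symm
  intro w hw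
  have := ha w hw
  simp only [a0] at this
  exact eq_neg_of_add_eq_zero_left this

lemma cmc_identity {R : ℝ} (hR : 0 < R) (f : ℂ → ℂ)
    (hf : DifferentiableOn ℂ f (Metric.ball 0 R)) (h : ∀ t ∈ Set.Ioo 0 R, f ((t:ℝ):ℂ) = 0) :
    ∀ w ∈ Metric.ball (0:ℂ) R, f w = 0 := by
  have ha := hf.analyticOnNhd Metric.isOpen_ball
  have := ha.eqOn_zero_of_preconnected_of_frequently_eq_zero
    (convex_ball (0:ℂ) R).isPreconnected (z₀ := 0) (by simpa using hR) (by
      have ht : Filter.Tendsto (fun t : ℝ => (t:ℂ)) (nhdsWithin 0 (Set.Ioi 0))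
          (nhdsWithin (0:ℂ) {0}ᶜ) := by
        refine tendsto_nhdsWithin_iff.2 ⟨?_, ?_⟩
        · have : Filter.Tendsto (fun t : ℝ => (t:ℂ)) (nhds 0) (nhds ((0:ℝ):ℂ)) :=
            Complex.continuous_ofReal.tendsto 0
          simpa using this.mono_left nhdsWithin_le_nhds
        · filter_upwards [self_mem_nhdsWithin] with t ht
          simpa using (ne_of_gt ht)
      refine ht.frequently (Filter.Eventually.frequently ?_)
      filter_upwards [Ioo_mem_nhdsGT hR] with t ht using h t ht)
  exact this

lemma cmc_csqrt {r : ℝ} (hr : 0 ≤ r) : (r:ℂ) ^ (1/2:ℂ) = (Real.sqrt r : ℂ) := by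
  rw [Real.sqrt_eq_rpow, Complex.ofReal_cpow hr]
  norm_num

lemma cmc_re_cosh (w : ℂ) (a : ℝ) : (Complex.cosh (a * w)).re ≤ Real.cosh (a * w.re) := by
  have h : (a * w : ℂ) = ((a * w.re : ℝ) : ℂ) + ((a * w.im : ℝ) : ℂ) * Complex.I := by
    conv_lhs => rw [← Complex.re_add_im w]
    push_cast; ring
  rw [h, Complex.cosh_add, Complex.cosh_mul_I, Complex.sinh_mul_I, ← Complex.ofReal_cosh,
    ← Complex.ofReal_sinh, ← Complex.ofReal_cos, ← Complex.ofReal_sin]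
  simp only [Complex.add_re, Complex.mul_re, Complex.ofReal_re, Complex.ofReal_im, Complex.I_re,
    Complex.I_im, Complex.mul_im]
  have := Real.cos_le_one (a * w.im)
  have := Real.cosh_pos (a * w.re)
  nlinarith

section
variable (H B s0 : ℝ)

/-- radicand -/
noncomputable def cmcF (H B s : ℝ) : ℝ := 1 + B ^ 2 - 2 * B * Real.cosh (2 * H * s)

lemma cmcF_s0 (hH : 0 < H) (hB : 0 < B) : cmcF H B (|Real.log B| / (2 * H)) = 0 := by
  unfold cmcF
  rw [mul_div_cancel₀ _ (by positivity), Real.cosh_abs, Real.cosh_log hB]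
  field_simp; ring

lemma cmcF_lt (hH : 0 < H) (hB : 0 < B) {s t : ℝ} (h : |s| < |t|) : cmcF H B t < cmcF H B s := by
  unfold cmcF
  have : Real.cosh (2 * H * s) < Real.cosh (2 * H * t) := by
    rw [Real.cosh_lt_cosh, abs_mul (2 * H) s, abs_mul (2 * H) t]
    exact mul_lt_mul_of_pos_left h (by positivity)
  nlinarith

lemma cmcF_pos (hH : 0 < H) (hB : 0 < B) (h1 : 0 < s0) (h0 : cmcF H B s0 = 0) {s : ℝ}
    (h : |s| < s0) : 0 < cmcF H B s := by
  rw [← h0]; exact cmcF_lt H B hH hB (by rwa [abs_of_pos h1])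

lemma cmc_slit (hH : 0 < H) (hB : 0 < B) (h1 : 0 < s0) (h0 : cmcF H B s0 = 0) (w : ℂ)
    (hw : w ∈ Metric.ball (0:ℂ) s0) :
    (1 + B ^ 2 - 2 * B * Complex.cosh ((2 * H : ℝ) * w) : ℂ) ∈ Complex.slitPlane := by
  have hre : 0 < (1 + B ^ 2 - 2 * B * Complex.cosh ((2 * H : ℝ) * w) : ℂ).re := by
    have h2 := cmc_re_cosh w (2 * H)
    have h3 : |w.re| < s0 := (Complex.abs_re_le_norm w).trans_lt (by simpa using hw)
    have h4 := cmcF_pos H B s0 hH hB h1 h0 h3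
    unfold cmcF at h4
    have : (1 + B ^ 2 - 2 * B * Complex.cosh ((2 * H : ℝ) * w) : ℂ).re
      = 1 + B ^ 2 - 2 * B * (Complex.cosh ((2 * H : ℝ) * w)).re := by
      rw [show (1 + B ^ 2 - 2 * B * Complex.cosh ((2 * H : ℝ) * w) : ℂ) =
        ((1 + B ^ 2 : ℝ):ℂ) - ((2 * B : ℝ):ℂ) * Complex.cosh ((2 * H : ℝ) * w) by push_cast; ring,
        Complex.sub_re, Complex.re_ofReal_mul, Complex.ofReal_re]
    rw [this]
    nlinarith
  exact Or.inl hre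

lemma cmc_Q (hH : 0 < H) (hB : 0 < B) (h1 : 0 < s0) (h0 : cmcF H B s0 = 0) :
    ∃ Q : ℂ → ℂ, DifferentiableOn ℂ Q (Metric.ball 0 s0) ∧
      ∀ s : ℝ, |s| < s0 → Q s = (Real.sqrt (cmcF H B s) : ℂ) := by
  refine ⟨fun w => (1 + B ^ 2 - 2 * B * Complex.cosh ((2 * H : ℝ) * w)) ^ (1/2:ℂ), ?_, ?_⟩
  · intro w hw
    apply DifferentiableAt.differentiableWithinAt
    exact DifferentiableAt.cpow_const (by fun_prop) (cmc_slit H B s0 hH hB h1 h0 w hw)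
  · intro s hs
    have h3 : (1 + B ^ 2 - 2 * B * Complex.cosh ((2 * H : ℝ) * s) : ℂ) = (cmcF H B s : ℂ) := by
      unfold cmcF; push_cast; rfl
    beta_reduce
    rw [h3, cmc_csqrt (cmcF_pos H B s0 hH hB h1 h0 hs).le]

lemma cmc_X (hH : 0 < H) (hB : 0 < B) (h1 : 0 < s0) (h0 : cmcF H B s0 = 0) :
    ∃ X : ℂ → ℂ, X 0 = 0 ∧ DifferentiableOn ℂ X (Metric.ball 0 s0) ∧
      (∀ s : ℝ, |s| < s0 → HasDerivAt X
        (((B * Real.cosh (2 * H * s) - 1) / Real.sqrt (cmcF H B s) : ℝ) : ℂ) s) ∧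
      (∀ w ∈ Metric.ball (0:ℂ) s0, X (-w) = -X w) ∧
      ∀ s : ℝ, |s| < s0 → X s = ((∫ t in (0:ℝ)..s,
        (B * Real.cosh (2 * H * t) - 1) / Real.sqrt (cmcF H B t) : ℝ) : ℂ) := by
  obtain ⟨X, hX0, hX, hodd⟩ := cmc_odd_primitive h1
    (fun w => (B * Complex.cosh ((2 * H : ℝ) * w) - 1) /
      (1 + B ^ 2 - 2 * B * Complex.cosh ((2 * H : ℝ) * w)) ^ (1/2:ℂ)) (by
      intro w hw
      apply DifferentiableAt.differentiableWithinAt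
      have hsl := cmc_slit H B s0 hH hB h1 h0 w hw
      refine DifferentiableAt.fun_div (by fun_prop) ?_ ?_
      · exact DifferentiableAt.cpow_const (by fun_prop) hsl
      · rw [Complex.cpow_ne_zero_iff]
        exact Or.inl (Complex.slitPlane_ne_zero hsl)) (by
      intro w
      simp only [mul_neg, Complex.cosh_neg])
  have key : ∀ s : ℝ, |s| < s0 → HasDerivAt X
        (((B * Real.cosh (2 * H * s) - 1) / Real.sqrt (cmcF H B s) : ℝ) : ℂ) s := by
    intro s hs
    have h2 := hX s (by simpa using hs)
    convert h2 using 1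
    have h3 : (1 + B ^ 2 - 2 * B * Complex.cosh ((2 * H : ℝ) * s) : ℂ) = (cmcF H B s : ℂ) := by
      unfold cmcF; push_cast; rfl
    rw [h3, cmc_csqrt (cmcF_pos H B s0 hH hB h1 h0 hs).le]
    push_cast; rfl
  refine ⟨X, hX0, fun w hw => (hX w hw).differentiableAt.differentiableWithinAt, key, hodd, ?_⟩
  intro s hs
  have hsub : ∀ t ∈ Set.uIcc 0 s, |t| < s0 := by
    intro t ht
    refine lt_of_le_of_lt ?_ hs
    have := Set.abs_sub_left_of_mem_uIcc ht
    simpa using this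
  have h5 := intervalIntegral.integral_eq_sub_of_hasDerivAt (a := 0) (b := s)
    (f := fun t : ℝ => X t) (fun t ht => (key t (hsub t ht)).comp_ofReal) (by
      apply ContinuousOn.intervalIntegrable
      have : ContinuousOn (fun t => (B * Real.cosh (2 * H * t) - 1) / Real.sqrt (cmcF H B t))
        (Set.uIcc 0 s) := by
        apply ContinuousOn.div (by fun_prop)
        · unfold cmcF; fun_prop
        · intro t ht
          exact (Real.sqrt_pos.2 (cmcF_pos H B s0 hH hB h1 h0 (hsub t ht))).ne'
      exact Complex.continuous_ofReal.comp_continuousOn this)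
  rw [intervalIntegral.integral_ofReal] at h5
  rw [h5]; simp [hX0]

lemma cmc_G (hB : 0 < B) (hB1 : B ≠ 1) :
    ∃ G : ℂ → ℂ, G 0 = 0 ∧ DifferentiableOn ℂ G (Metric.ball 0 |1 - B|) ∧
      (∀ q : ℝ, |q| < |1 - B| → HasDerivAt G
        (((((1 + B ^ 2 - q ^ 2) / 2 - 1) / H) / (Real.sqrt ((1 - B) ^ 2 - q ^ 2) *
          Real.sqrt ((1 + B) ^ 2 - q ^ 2)) : ℝ) : ℂ) q) ∧
      (∀ w ∈ Metric.ball (0:ℂ) |1 - B|, G (-w) = -G w) := by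
  have hR : 0 < |1 - B| := abs_pos.2 (sub_ne_zero.2 hB1.symm)
  have hle : |1 - B| ≤ |1 + B| := by
    rw [abs_of_pos (by linarith : 0 < 1 + B)]; exact abs_le.2 ⟨by linarith, by linarith⟩
  have aux : ∀ (c : ℝ) (w : ℂ), ‖w‖ < |c| → 0 < (((c ^ 2 : ℝ) : ℂ) - w ^ 2).re := by
    intro c w hw
    have h1 : (w ^ 2).re ≤ ‖w‖ ^ 2 := by
      rw [← norm_pow]; exact Complex.re_le_norm _
    have h2 : ‖w‖ ^ 2 < c ^ 2 := by
      rw [← sq_abs c]; exact pow_lt_pow_left₀ hw (norm_nonneg _) two_ne_zero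
    rw [Complex.sub_re, Complex.ofReal_re]; linarith
  obtain ⟨G, hG0, hG, hodd⟩ := cmc_odd_primitive hR
    (fun w => (((1 + B ^ 2 - w ^ 2) / 2 - 1) / H) /
      (((((1 - B) ^ 2 : ℝ) : ℂ) - w ^ 2) ^ (1/2:ℂ) *
       ((((1 + B) ^ 2 : ℝ) : ℂ) - w ^ 2) ^ (1/2:ℂ))) (by
      intro w hw
      apply DifferentiableAt.differentiableWithinAt
      have hw : ‖w‖ < |1 - B| := by simpa using hw
      have s1 : (((1 - B) ^ 2 : ℝ) : ℂ) - w ^ 2 ∈ Complex.slitPlane := Or.inl (aux _ _ hw)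
      have s2 : (((1 + B) ^ 2 : ℝ) : ℂ) - w ^ 2 ∈ Complex.slitPlane :=
        Or.inl (aux _ _ (hw.trans_le hle))
      refine DifferentiableAt.fun_div (by fun_prop) (DifferentiableAt.fun_mul ?_ ?_)
        (mul_ne_zero ?_ ?_)
      · exact DifferentiableAt.cpow_const (by fun_prop) s1
      · exact DifferentiableAt.cpow_const (by fun_prop) s2
      · rw [Complex.cpow_ne_zero_iff]
        exact Or.inl (Complex.slitPlane_ne_zero s1)
      · rw [Complex.cpow_ne_zero_iff]
        exact Or.inl (Complex.slitPlane_ne_zero s2)) (by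
      intro w
      simp only [neg_sq])
  refine ⟨G, hG0, fun w hw => (hG w hw).differentiableAt.differentiableWithinAt, ?_, hodd⟩
  intro q hq
  have h2 := hG q (by simpa using hq)
  convert h2 using 1
  have e1 : q ^ 2 < (1 - B) ^ 2 := sq_lt_sq.2 hq
  have e2 : q ^ 2 < (1 + B) ^ 2 := sq_lt_sq.2 (hq.trans_le hle)
  have h3 : ∀ c : ℝ, (((c ^ 2 : ℝ) : ℂ) - (q:ℂ) ^ 2) = ((c ^ 2 - q ^ 2 : ℝ) : ℂ) := by
    intro c; push_cast; rfl
  rw [h3, h3, cmc_csqrt (by linarith), cmc_csqrt (by linarith)]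
  push_cast; rfl

lemma cmcF_zero : cmcF H B 0 = (1 - B) ^ 2 := by
  unfold cmcF; simp; ring

lemma cmcF_cont : Continuous (cmcF H B) := by unfold cmcF; fun_prop

lemma cmcF_surj (h1 : 0 < s0) (h0 : cmcF H B s0 = 0) {y : ℝ}
    (hy : y ∈ Set.Ioo 0 ((1 - B) ^ 2)) : ∃ s ∈ Set.Ioo 0 s0, cmcF H B s = y := by
  have := intermediate_value_Ioo' h1.le (cmcF_cont H B).continuousOn
  rw [h0, cmcF_zero] at this
  exact this hy

lemma cmc_q_mem (hH : 0 < H) (hB : 0 < B) (h1 : 0 < s0) (h0 : cmcF H B s0 = 0)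
    {s : ℝ} (hs : s ∈ Set.Ioo 0 s0) :
    0 < Real.sqrt (cmcF H B s) ∧ Real.sqrt (cmcF H B s) < |1 - B| := by
  have h2 := cmcF_pos H B s0 hH hB h1 h0 (s := s) (by rw [abs_of_pos hs.1]; exact hs.2)
  refine ⟨Real.sqrt_pos.2 h2, ?_⟩
  rw [← Real.sqrt_sq_eq_abs]
  apply Real.sqrt_lt_sqrt h2.le
  rw [← cmcF_zero H]
  exact cmcF_lt H B hH hB (by simpa using hs.1.ne')

lemma cmc_q_deriv (hH : 0 < H) (hB : 0 < B) (h1 : 0 < s0) (h0 : cmcF H B s0 = 0)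
    {s : ℝ} (hs : |s| < s0) :
    HasDerivAt (fun s => Real.sqrt (cmcF H B s))
      (-(2 * B * H * Real.sinh (2 * H * s)) / Real.sqrt (cmcF H B s)) s := by
  have h2 := cmcF_pos H B s0 hH hB h1 h0 hs
  have h3 : HasDerivAt (cmcF H B) (-(4 * B * H * Real.sinh (2 * H * s))) s := by
    unfold cmcF
    have := ((((hasDerivAt_id s).const_mul (2 * H)).cosh).const_mul (2 * B)).const_sub (1 + B ^ 2)
    refine this.congr_deriv ?_
    simp; ring
  refine (h3.sqrt h2.ne').congr_deriv ?_
  have := (Real.sqrt_pos.2 h2).ne'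
  field_simp; ring

lemma cmc_alg (hH : 0 < H) (hB : 0 < B) {s : ℝ} (hs : 0 < s) (h2 : 0 < cmcF H B s) :
    ((((1 + B ^ 2 - Real.sqrt (cmcF H B s) ^ 2) / 2 - 1) / H) /
      (Real.sqrt ((1 - B) ^ 2 - Real.sqrt (cmcF H B s) ^ 2) *
          Real.sqrt ((1 + B) ^ 2 - Real.sqrt (cmcF H B s) ^ 2))) *
      (-(2 * B * H * Real.sinh (2 * H * s)) / Real.sqrt (cmcF H B s)) =
      -((B * Real.cosh (2 * H * s) - 1) / Real.sqrt (cmcF H B s)) := by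
  have hsi : 0 < Real.sinh (2 * H * s) := Real.sinh_pos_iff.2 (by positivity)
  have hc := Real.one_le_cosh (2 * H * s)
  have hq := Real.sqrt_pos.2 h2
  rw [Real.sq_sqrt h2.le, ← Real.sqrt_mul]
  · have : ((1 - B) ^ 2 - cmcF H B s) * ((1 + B) ^ 2 - cmcF H B s) =
      (2 * B * Real.sinh (2 * H * s)) ^ 2 := by
      unfold cmcF
      rw [mul_pow, Real.sinh_sq]; ring
    rw [this, Real.sqrt_sq (by positivity)]
    have e : (1 + B ^ 2 - cmcF H B s) / 2 - 1 = B * Real.cosh (2 * H * s) - 1 := by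
      unfold cmcF; ring
    rw [e]
    field_simp
  · unfold cmcF; nlinarith

lemma cmc_slope (hH : 0 < H) (hB : 0 < B) (hB1 : B ≠ 1) (h1 : 0 < s0) (h0 : cmcF H B s0 = 0)
    {s : ℝ} (hs : s ∈ Set.Ioo 0 s0) :
    1 / 2 ≤ |(B * Real.cosh (2 * H * s) - 1) / Real.sqrt (cmcF H B s)| := by
  obtain ⟨hq0, hq1⟩ := cmc_q_mem H B s0 hH hB h1 h0 hs
  have h2 := Real.sqrt_pos.1 hq0
  have hc := Real.one_le_cosh (2 * H * s)
  rw [abs_div, abs_of_pos hq0, le_div_iff₀ hq0]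
  refine le_trans (mul_le_mul_of_nonneg_left hq1.le (by norm_num)) ?_
  unfold cmcF at h2
  rcases lt_or_gt_of_ne hB1 with h | h
  · rw [abs_of_pos (by linarith), abs_of_neg (by nlinarith)]
    nlinarith
  · rw [abs_of_neg (by linarith), abs_of_nonneg (by nlinarith)]
    nlinarith

lemma cmc_curve (hH : 0 < H) (hB : 0 < B) (hB1 : B ≠ 1) (h1 : 0 < s0) (h0 : cmcF H B s0 = 0) :
    ∃ (X G Q : ℂ → ℂ) (X0 : ℂ), X0 ≠ 0 ∧ DifferentiableOn ℂ X (Metric.ball 0 s0) ∧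
      (∀ w ∈ Metric.ball (0:ℂ) s0, X (-w) = -X w) ∧
      (∀ s : ℝ, |s| < s0 → X s = ((∫ t in (0:ℝ)..s,
        (B * Real.cosh (2 * H * t) - 1) / Real.sqrt (cmcF H B t) : ℝ) : ℂ)) ∧
      DifferentiableOn ℂ Q (Metric.ball 0 s0) ∧
      (∀ s : ℝ, |s| < s0 → Q s = (Real.sqrt (cmcF H B s) : ℂ)) ∧
      DifferentiableOn ℂ G (Metric.ball 0 |1 - B|) ∧
      (∀ w ∈ Metric.ball (0:ℂ) |1 - B|, G (-w) = -G w) ∧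
      ∀ s ∈ Set.Ioo 0 s0, X (s:ℝ) + G (Real.sqrt (cmcF H B s) : ℂ) = X0 := by
  obtain ⟨X, hX0, hXd, hX, hXo, hXi⟩ := cmc_X H B s0 hH hB h1 h0
  obtain ⟨G, hG0, hGd, hG, hGo⟩ := cmc_G H B hB hB1
  obtain ⟨Q, hQd, hQ⟩ := cmc_Q H B s0 hH hB h1 h0
  have hd : ∀ s ∈ Set.Ioo 0 s0,
      HasDerivAt (fun s : ℝ => X (s:ℝ) + G (Real.sqrt (cmcF H B s) : ℂ)) 0 s := by
    intro s hs
    have hs' : |s| < s0 := by rw [abs_of_pos hs.1]; exact hs.2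
    obtain ⟨hq0, hq1⟩ := cmc_q_mem H B s0 hH hB h1 h0 hs
    have e1 := (hX s hs').comp_ofReal
    have e2 := (hG (Real.sqrt (cmcF H B s)) (by rwa [abs_of_pos hq0])).comp_ofReal
    have e3 := e2.scomp s (cmc_q_deriv H B s0 hH hB h1 h0 hs')
    refine (e1.add e3).congr_deriv ?_
    rw [Complex.real_smul, ← Complex.ofReal_mul, mul_comm (-(2 * B * H * Real.sinh (2 * H * s)) / _),
      cmc_alg H B hH hB hs.1 (Real.sqrt_pos.1 hq0)]
    push_cast; ring
  obtain ⟨X0, hc⟩ := (isOpen_Ioo (a := (0:ℝ)) (b := s0)).exists_is_const_of_deriv_eq_zero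
    (convex_Ioo (0:ℝ) s0).isPreconnected
    (fun w hw => (hd w hw).differentiableAt.differentiableWithinAt) (fun w hw => (hd w hw).deriv)
  refine ⟨X, G, Q, X0, ?_, hXd, hXo, hXi, hQd, hQ, hGd, hGo, hc⟩
  have hR : 0 < |1 - B| := abs_pos.2 (sub_ne_zero.2 hB1.symm)
  -- lower bound for X
  have hlow : ∀ s ∈ Set.Ioo 0 s0, s / 2 ≤ ‖X (s:ℝ)‖ := by
    intro s hs
    have hab : ∀ t ∈ Set.Icc 0 s, |t| < s0 := by
      intro t ht; rw [abs_of_nonneg ht.1]; exact ht.2.trans_lt hs.2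
    obtain ⟨c, hc, hce⟩ := exists_hasDerivAt_eq_slope (fun t : ℝ => (X t).re)
      (fun t => (B * Real.cosh (2 * H * t) - 1) / Real.sqrt (cmcF H B t)) hs.1
      (fun t ht => by
        have := (hX t (hab t ht)).real_of_complex
        exact this.continuousAt.continuousWithinAt)
      (fun t ht => by
        have := (hX t (hab t ⟨ht.1.le, ht.2.le⟩)).real_of_complex
        rwa [Complex.ofReal_re] at this)
    have h3 := cmc_slope H B s0 hH hB hB1 h1 h0 (s := c) ⟨hc.1, hc.2.trans hs.2⟩
    rw [hce] at h3
    simp only [Complex.ofReal_zero, hX0, Complex.zero_re, sub_zero, abs_div, abs_of_pos hs.1] at h3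
    rw [le_div_iff₀ hs.1] at h3
    have := Complex.abs_re_le_norm (X s)
    linarith
  intro hX00
  have hlim : Filter.Tendsto (fun s : ℝ => G (Real.sqrt (cmcF H B s) : ℂ)) (nhdsWithin s0 (Set.Iio s0))
      (nhds 0) := by
    have c1 : ContinuousAt G ((Real.sqrt (cmcF H B s0) : ℝ) : ℂ) := by
      rw [h0, Real.sqrt_zero, Complex.ofReal_zero]
      exact (hGd.differentiableAt (Metric.ball_mem_nhds _ hR)).continuousAt
    have c2 : ContinuousAt (fun s : ℝ => (Real.sqrt (cmcF H B s) : ℂ)) s0 := by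
      have := cmcF_cont H B
      fun_prop
    have c3 : ContinuousAt (fun s : ℝ => G (Real.sqrt (cmcF H B s) : ℂ)) s0 :=
      ContinuousAt.comp (f := fun s : ℝ => (Real.sqrt (cmcF H B s) : ℂ)) (g := G) c1 c2
    have := c3.tendsto
    rw [h0, Real.sqrt_zero, Complex.ofReal_zero, hG0] at this
    exact this.mono_left nhdsWithin_le_nhds
  have hev : ∀ᶠ s in nhdsWithin s0 (Set.Iio s0), s0 / 4 ≤ ‖G (Real.sqrt (cmcF H B s) : ℂ)‖ := by
    filter_upwards [Ioo_mem_nhdsLT (show s0 / 2 < s0 by linarith)] with s hs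
    have hs' : s ∈ Set.Ioo 0 s0 := ⟨by linarith [hs.1], hs.2⟩
    have h4 := hlow s hs'
    have h5 := hc s hs'
    rw [hX00] at h5
    rw [eq_neg_of_add_eq_zero_left h5, norm_neg] at h4
    linarith [hs.1]
  have := ge_of_tendsto hlim.norm hev
  rw [norm_zero] at this
  linarith

lemma cmc_shift (hH : 0 < H) (hB : 0 < B) (hB1 : B ≠ 1) (h1 : 0 < s0) (h0 : cmcF H B s0 = 0)
    (x : ℝ → ℝ) (hx : ∀ s, |s| < s0 → x s = ∫ t in (0:ℝ)..s,
        (B * Real.cosh (2 * H * t) - 1) / Real.sqrt (cmcF H B t)) :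
    ∃ X0 : ℂ, X0 ≠ 0 ∧ ∀ f : ℂ × ℂ → ℂ, Differentiable ℂ f →
      (∀ s ∈ Set.Ioo 0 s0, f ((x s : ℂ), (Real.sqrt (cmcF H B s) : ℂ)) = 0) →
      ∀ k : ℕ, ∀ s ∈ Set.Ioo 0 s0,
        f ((x s : ℂ) + k * (4 * X0), (Real.sqrt (cmcF H B s) : ℂ)) = 0 := by
  obtain ⟨X, G, Q, X0, hne, hXd, hXo, hXi, hQd, hQ, hGd, hGo, hc⟩ :=
    cmc_curve H B s0 hH hB hB1 h1 h0
  have hR : 0 < |1 - B| := abs_pos.2 (sub_ne_zero.2 hB1.symm)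
  have hXx : ∀ s : ℝ, |s| < s0 → (x s : ℂ) = X s := fun s hs => by rw [hx s hs, hXi s hs]
  have habs : ∀ s ∈ Set.Ioo 0 s0, |s| < s0 := fun s hs => by rw [abs_of_pos hs.1]; exact hs.2
  -- reflection in the point where the profile curve meets the axis
  have hsig : ∀ f : ℂ × ℂ → ℂ, Differentiable ℂ f →
      (∀ s ∈ Set.Ioo 0 s0, f ((x s : ℂ), (Real.sqrt (cmcF H B s) : ℂ)) = 0) →
      ∀ s ∈ Set.Ioo 0 s0, f (2 * X0 - (x s : ℂ), -(Real.sqrt (cmcF H B s) : ℂ)) = 0 := by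
    intro f hf h s hs
    have hz := cmc_identity hR (fun w => f (X0 - G w, w))
      (hf.comp_differentiableOn (by fun_prop)) (by
        intro t ht
        obtain ⟨s, hs, hst⟩ := cmcF_surj H B s0 h1 h0 (y := t ^ 2) ⟨by have := ht.1; positivity, by
          rw [← sq_abs (1 - B)]; exact pow_lt_pow_left₀ ht.2 ht.1.le two_ne_zero⟩
        have h3 := h s hs
        have h4 := hc s hs
        rw [hst, Real.sqrt_sq ht.1.le] at h3 h4
        rw [hXx s (habs s hs)] at h3
        show f (X0 - G t, t) = 0
        rw [← h4, add_sub_cancel_right]; exact h3)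
    obtain ⟨hq0, hq1⟩ := cmc_q_mem H B s0 hH hB h1 h0 hs
    have hm : (Real.sqrt (cmcF H B s) : ℂ) ∈ Metric.ball (0:ℂ) |1 - B| := by
      simpa [abs_of_pos hq0] using hq1
    have h5 := hz (-(Real.sqrt (cmcF H B s) : ℂ)) (by simpa using hm)
    beta_reduce at h5
    rw [hGo _ hm] at h5
    convert h5 using 3
    rw [hXx s (habs s hs), ← hc s hs]; ring
  -- reflection in the neck
  have htau : ∀ f : ℂ × ℂ → ℂ, Differentiable ℂ f →
      (∀ s ∈ Set.Ioo 0 s0, f ((x s : ℂ), (Real.sqrt (cmcF H B s) : ℂ)) = 0) →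
      ∀ s ∈ Set.Ioo 0 s0, f (-(x s : ℂ), (Real.sqrt (cmcF H B s) : ℂ)) = 0 := by
    intro f hf h s hs
    have hz := cmc_identity h1 (fun w => f (X w, Q w))
      (hf.comp_differentiableOn (by fun_prop)) (by
        intro t ht
        have h3 := h t ht
        rw [hXx t (habs t ht), ← hQ t (habs t ht)] at h3
        exact h3)
    have hm : (s : ℂ) ∈ Metric.ball (0:ℂ) s0 := by simpa using habs s hs
    have h5 := hz ((-s : ℝ) : ℂ) (by simpa using hm)
    beta_reduce at h5
    rw [hQ (-s) (by simpa using habs s hs)] at h5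
    rw [show cmcF H B (-s) = cmcF H B s by simp [cmcF], Complex.ofReal_neg, hXo _ hm,
      ← hXx s (habs s hs)] at h5
    exact h5
  refine ⟨X0, hne, ?_⟩
  have hrho : ∀ f : ℂ × ℂ → ℂ, Differentiable ℂ f →
      (∀ s ∈ Set.Ioo 0 s0, f ((x s : ℂ), (Real.sqrt (cmcF H B s) : ℂ)) = 0) →
      ∀ s ∈ Set.Ioo 0 s0, f (2 * X0 + (x s : ℂ), -(Real.sqrt (cmcF H B s) : ℂ)) = 0 := by
    intro f hf h s hs
    have := htau (fun p => f (2 * X0 - p.1, -p.2)) (hf.comp (by fun_prop)) (hsig f hf h) s hs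
    simpa using this
  intro f hf h k
  induction k with
  | zero => simpa using h
  | succ k ih =>
    intro s hs
    have a1 := hrho (fun p => f (p.1 + k * (4 * X0), p.2)) (hf.comp (by fun_prop)) ih
    have a2 := hrho (fun p => f (2 * X0 + p.1 + k * (4 * X0), -p.2)) (hf.comp (by fun_prop)) a1 s hs
    convert a2 using 3
    · push_cast; ring
    · simp
end

lemma cmc_poly (P : MvPolynomial (Fin 3) ℝ) (X0 a y w : ℂ) (h0 : X0 ≠ 0)
    (h : ∀ k : ℕ, MvPolynomial.aeval ![a + k * X0, y, w] P = 0) (v : ℂ) :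
    MvPolynomial.aeval ![v, y, w] P = 0 := by
  let p : Polynomial ℂ := MvPolynomial.aeval ![Polynomial.X, Polynomial.C y, Polynomial.C w] P
  have hp : ∀ v : ℂ, p.eval v = MvPolynomial.aeval ![v, y, w] P := by
    intro v
    have : ((Polynomial.aeval v).restrictScalars ℝ).comp
        (MvPolynomial.aeval ![Polynomial.X, Polynomial.C y, Polynomial.C w]) =
        (MvPolynomial.aeval ![v, y, w] : MvPolynomial (Fin 3) ℝ →ₐ[ℝ] ℂ) := by
      ext i; fin_cases i <;> simp
    rw [← this]
    simp [p]
  have : p = 0 := by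
    apply Polynomial.eq_zero_of_infinite_isRoot
    have hi : Function.Injective (fun k : ℕ => a + k * X0) := by
      intro i j hij
      simpa [h0] using hij
    refine (Set.infinite_range_of_injective hi).mono ?_
    rintro _ ⟨k, rfl⟩
    show p.eval _ = 0
    rw [hp]; exact h k
  rw [← hp, this]; simp

lemma cmc_aeval_diff (P : MvPolynomial (Fin 3) ℝ) (g : ℂ × ℂ → Fin 3 → ℂ)
    (hg : ∀ i, Differentiable ℂ (fun p => g p i)) :
    Differentiable ℂ (fun p => MvPolynomial.aeval (g p) P) := by
  induction P using MvPolynomial.induction_on with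
  | C a => simp
  | add p q hp hq => simpa only [map_add] using! hp.add hq
  | mul_X p i hp => simpa only [map_mul, MvPolynomial.aeval_X] using! hp.mul (hg i)

/-- The spacelike CMC surface of revolution about the spacelike x-axis in
Lorentz–Minkowski space `E₁³` (Kenmotsu-type parametrization, parameter `B ∈ (0,1) ∪ (1,∞)`,
nonvanishing discriminant of the associated elliptic curve) is not algebraic. -/
theorem spacelike_cmc_revolution_spacelike_axis_not_algebraic
    (H B : ℝ) (hH : 0 < H) (hB : B ∈ Set.Ioo (0:ℝ) 1 ∪ Set.Ioi (1:ℝ))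
    (c l m n : ℝ)
    (hc : c = -(1 + B ^ 2) / (6 * B))
    (hl : l = -(B ^ 2 + 1) - 2 * B * c + (B ^ 2 + 1) * c ^ 2 + 2 * B * c ^ 3)
    (hm : m = 2 * B - 2 * c * (B ^ 2 + 1) - 6 * B * c ^ 2)
    (hn : n = -(2 * B))
    (hdisc : 4 * m ^ 3 + 27 * n * l ^ 2 ≠ 0)
    (F : ℝ → ℝ) (hF : ∀ s, F s = 1 + B ^ 2 - 2 * B * Real.cosh (2 * H * s))
    (I : Set ℝ) (hI : I = {s : ℝ | 0 < F s})
    (hI' : I.Nonempty ∧ IsOpen I ∧ (0:ℝ) ∈ I)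
    (x z : ℝ → ℝ)
    (hz : ∀ s ∈ I, z s = (1 / (2 * H)) * Real.sqrt (F s))
    (hx : ∀ s ∈ I, x s = ∫ t in (0:ℝ)..s,
      (B * Real.cosh (2 * H * t) - 1) / Real.sqrt (F t))
    (S : Set (Fin 3 → ℝ))
    (hS : S = {p : Fin 3 → ℝ | ∃ s ∈ I, ∃ θ : ℝ,
      p = ![x s, z s * Real.sinh θ, z s * Real.cosh θ]}) :
    ¬ ∃ P : MvPolynomial (Fin 3) ℝ, P ≠ 0 ∧ ∀ p ∈ S, MvPolynomial.eval p P = 0 := by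
  rintro ⟨P, hP0, hP⟩
  have hBpos : 0 < B := by
    rcases hB with h | h
    · exact h.1
    · exact lt_trans one_pos h
  have hB1 : B ≠ 1 := by
    rcases hB with h | h
    · exact h.2.ne
    · exact (ne_of_gt h)
  have hFe : F = cmcF H B := by
    funext s; rw [hF]; rfl
  set s0 := |Real.log B| / (2 * H) with hs0
  have h1 : 0 < s0 := by
    have : 0 < |Real.log B| := abs_pos.2 (Real.log_ne_zero_of_pos_of_ne_one hBpos hB1)
    positivity
  have h0 : cmcF H B s0 = 0 := cmcF_s0 H B hH hBpos
  have hmem : ∀ s, |s| < s0 → s ∈ I := by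
    intro s hs
    rw [hI, Set.mem_ofPred_eq, hFe]
    exact cmcF_pos H B s0 hH hBpos h1 h0 hs
  subst hFe
  obtain ⟨X0, hne, hshift⟩ := cmc_shift H B s0 hH hBpos hB1 h1 h0 x (fun s hs => hx s (hmem s hs))
  have habs : ∀ s ∈ Set.Ioo 0 s0, |s| < s0 := fun s hs => by rw [abs_of_pos hs.1]; exact hs.2
  have hall : ∀ s ∈ Set.Ioo 0 s0, ∀ θ v : ℝ,
      MvPolynomial.eval ![v, z s * Real.sinh θ, z s * Real.cosh θ] P = 0 := by
    intro s hs θ v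
    have hcoe : ∀ u : Fin 3 → ℝ, MvPolynomial.aeval (fun i => (u i : ℂ)) P
        = ((MvPolynomial.eval u P : ℝ) : ℂ) := by
      intro u
      have := MvPolynomial.aeval_algebraMap_apply (A := ℝ) ℂ u P
      simpa [MvPolynomial.aeval_eq_eval, Function.comp_def] using this
    have hvec : ∀ a b c : ℝ, (fun i => ((![a, b, c] i : ℝ) : ℂ)) = ![(a:ℂ), (b:ℂ), (c:ℂ)] := by
      intro a b c; funext i; fin_cases i <;> rfl
    have hfd : Differentiable ℂ (fun p : ℂ × ℂ => MvPolynomial.aeval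
        ![p.1, (1 / (2 * H) * p.2) * Real.sinh θ, (1 / (2 * H) * p.2) * Real.cosh θ] P) := by
      have hd : ∀ i : Fin 3, Differentiable ℂ (fun p : ℂ × ℂ =>
        (![p.1, (1 / (2 * H) * p.2) * Real.sinh θ, (1 / (2 * H) * p.2) * Real.cosh θ] :
          Fin 3 → ℂ) i) := by
        intro i; fin_cases i <;> simp <;> fun_prop
      exact cmc_aeval_diff P _ hd
    have hk := hshift _ hfd (by
      intro s hs
      have := hP ![x s, z s * Real.sinh θ, z s * Real.cosh θ] (by
        rw [hS]; exact ⟨s, hmem s (habs s hs), θ, rfl⟩)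
      have h3 := hcoe ![x s, z s * Real.sinh θ, z s * Real.cosh θ]
      rw [this, hvec, hz s (hmem s (habs s hs))] at h3
      push_cast at h3
      push_cast
      exact h3)
    have h4 := cmc_poly P (4 * X0) (x s) ((1 / (2 * H) * (Real.sqrt (cmcF H B s) : ℂ)) * Real.sinh θ)
      ((1 / (2 * H) * (Real.sqrt (cmcF H B s) : ℂ)) * Real.cosh θ)
      (mul_ne_zero (by norm_num) hne) (fun k => hk k s hs) v
    have h5 := hcoe ![v, z s * Real.sinh θ, z s * Real.cosh θ]
    rw [hvec, hz s (hmem s (habs s hs))] at h5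
    rw [hz s (hmem s (habs s hs))]
    rw [← Complex.ofReal_eq_zero, ← h5, ← h4]
    congr 2
    push_cast
    rfl
  have hb : 0 < |1 - B| := abs_pos.2 (sub_ne_zero.2 hB1.symm)
  set b := |1 - B| / (2 * H) with hbdef
  have hbpos : 0 < b := by positivity
  apply hP0
  refine MvPolynomial.funext_set
    (![Set.univ, Set.Ioo 0 (b / 4), Set.Ioo (b / 2) (3 * b / 4)] : Fin 3 → Set ℝ) ?_ ?_
  · intro i
    fin_cases i
    · exact Set.infinite_univ
    · exact Set.Ioo_infinite (by linarith)
    · exact Set.Ioo_infinite (by linarith)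
  · intro p hp
    have hy : p 1 ∈ Set.Ioo 0 (b / 4) := hp 1 trivial
    have hw : p 2 ∈ Set.Ioo (b / 2) (3 * b / 4) := hp 2 trivial
    obtain ⟨hy0, hy1⟩ := hy
    obtain ⟨hw0, hw1⟩ := hw
    rw [map_zero]
    set r := p 2 ^ 2 - p 1 ^ 2 with hr
    have hr0 : 0 < r := by nlinarith
    have hr1 : r < b ^ 2 := by nlinarith
    obtain ⟨s, hs, hFs⟩ := cmcF_surj H B s0 h1 h0 (y := 4 * H ^ 2 * r) ⟨by positivity, by
      have : (1 - B) ^ 2 = 4 * H ^ 2 * b ^ 2 := by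
        rw [hbdef, div_pow, sq_abs]; field_simp; norm_num
      rw [this]; exact mul_lt_mul_of_pos_left hr1 (by positivity)⟩
    have hzs : z s = Real.sqrt r := by
      rw [hz s (hmem s (habs s hs)), hFs, show 4 * H ^ 2 * r = (2 * H) ^ 2 * r by ring,
        Real.sqrt_mul (by positivity), Real.sqrt_sq (by positivity)]
      field_simp
    have hq := Real.sqrt_pos.2 hr0
    have h7 := hall s hs (Real.arsinh (p 1 / Real.sqrt r)) (p 0)
    have hch : Real.sqrt r * Real.cosh (Real.arsinh (p 1 / Real.sqrt r)) = p 2 := by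
      rw [Real.cosh_arsinh, div_pow, Real.sq_sqrt hr0.le,
        show 1 + p 1 ^ 2 / r = p 2 ^ 2 / r by field_simp; rw [hr]; ring,
        ← Real.sqrt_mul hr0.le, mul_div_cancel₀ _ hr0.ne', Real.sqrt_sq (by linarith)]
    rw [hzs, hch, Real.sinh_arsinh, mul_div_cancel₀ _ hq.ne'] at h7
    have hpe : ![p 0, p 1, p 2] = p := by
      funext i; fin_cases i <;> rfl
    rw [hpe] at h7
    exact h7
end

section
/- Let H > 0 and B ∈ (0,1) ∪ (1,∞). Let F(s) = 1 + B² + 2B·sin(2Hs) (which is strictly positive for all s ∈ ℝ since B ≠ 1), and define y(s) = (1/(2H))·√(F(s)) and x(s) = ∫_{0}^{s} (1 + B·sin(2Ht))/√(F(t)) dt. Then the CMC surface of revolution in Euclidean space, S = {(x(s), y(s)·cos θ, y(s)·sin θ) : s ∈ ℝ, θ ∈ ℝ} ⊆ ℝ³ (an unduloid if 0 < B < 1, a nodoid if B > 1), is not algebraic. -/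
theorem line_zero (P : MvPolynomial (Fin 3) ℝ) (p d : Fin 3 → ℝ) (A : Set ℝ) (hA : A.Infinite)
    (h : ∀ t ∈ A, MvPolynomial.eval (fun i => p i + d i * t) P = 0) (t : ℝ) :
    MvPolynomial.eval (fun i => p i + d i * t) P = 0 := by
  have key : ∀ t : ℝ, Polynomial.eval t (MvPolynomial.aeval
      (fun i => Polynomial.C (p i) + Polynomial.C (d i) * Polynomial.X) P)
      = MvPolynomial.eval (fun i => p i + d i * t) P := by
    intro t; clear h
    induction P using MvPolynomial.induction_on with
    | C a => simp
    | add p q hp hq => simp_all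
    | mul_X p i hp => simp_all
  have hz : MvPolynomial.aeval
      (fun i => Polynomial.C (p i) + Polynomial.C (d i) * Polynomial.X) P = 0 := by
    apply Polynomial.eq_zero_of_infinite_isRoot
    refine hA.mono fun t ht => ?_
    simp only [Set.mem_ofPred_eq, Polynomial.IsRoot.def]
    rw [key, h t ht]
  rw [← key, hz]; simp

theorem pair_nonneg (B σ : ℝ) (hB : 0 < B) (h1 : -1 ≤ σ) (h2 : σ ≤ 1)
    (hp : 0 < 1 + B ^ 2 + 2 * B * σ) (hm : 0 < 1 + B ^ 2 + 2 * B * (-σ)) :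
    0 ≤ (1 + B * σ) / Real.sqrt (1 + B ^ 2 + 2 * B * σ)
      + (1 + B * (-σ)) / Real.sqrt (1 + B ^ 2 + 2 * B * (-σ)) := by
  wlog h0 : 0 ≤ σ generalizing σ
  · have := this (-σ) (by linarith) (by linarith) hm (by simpa using hp) (by linarith)
    rw [neg_neg] at this
    linarith
  have hx : 0 ≤ B * σ := by positivity
  have e : -((1 + B * (-σ)) / Real.sqrt (1 + B ^ 2 + 2 * B * (-σ)))
      ≤ (1 + B * σ) / Real.sqrt (1 + B ^ 2 + 2 * B * σ) := by
    rw [← neg_div, div_le_div_iff₀ (Real.sqrt_pos.2 hm) (Real.sqrt_pos.2 hp)]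
    apply le_of_abs_le
    apply abs_le_of_sq_le_sq _ (by positivity)
    rw [mul_pow, mul_pow, Real.sq_sqrt hm.le, Real.sq_sqrt hp.le]
    have : 0 ≤ 4 * (B * σ) * (B ^ 2 * (1 - σ ^ 2)) := by
      have : 0 ≤ 1 - σ ^ 2 := by nlinarith
      positivity
    nlinarith
  linarith

theorem cmc_revolution_euclidean_not_algebraic
    (H B : ℝ) (hH : 0 < H) (hB : B ∈ Set.Ioo (0:ℝ) 1 ∪ Set.Ioi (1:ℝ))
    (F : ℝ → ℝ) (hF : ∀ s, F s = 1 + B ^ 2 + 2 * B * Real.sin (2 * H * s))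
    (hFpos : ∀ s, 0 < F s)
    (x y : ℝ → ℝ)
    (hy : ∀ s, y s = (1 / (2 * H)) * Real.sqrt (F s))
    (hx : ∀ s, x s = ∫ t in (0:ℝ)..s,
      (1 + B * Real.sin (2 * H * t)) / Real.sqrt (F t))
    (S : Set (Fin 3 → ℝ))
    (hS : S = {p : Fin 3 → ℝ | ∃ s : ℝ, ∃ θ : ℝ,
      p = ![x s, y s * Real.cos θ, y s * Real.sin θ]}) :
    ¬ ∃ P : MvPolynomial (Fin 3) ℝ, P ≠ 0 ∧ ∀ p ∈ S, MvPolynomial.eval p P = 0 := by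
  rintro ⟨P, hP0, hP⟩
  have hB0 : 0 < B := by
    rcases hB with h | h
    · exact h.1
    · exact lt_trans one_pos h
  have hFc : Continuous F := by
    have : F = fun s => 1 + B ^ 2 + 2 * B * Real.sin (2 * H * s) := funext hF
    rw [this]; fun_prop
  set h : ℝ → ℝ := fun t => (1 + B * Real.sin (2 * H * t)) / Real.sqrt (F t) with hh
  have hc : Continuous h := by
    refine Continuous.div (by fun_prop) (by fun_prop) fun t => (Real.sqrt_pos.2 (hFpos t)).ne'
  have hint : ∀ a b, IntervalIntegrable h MeasureTheory.volume a b := fun a b =>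
    hc.intervalIntegrable a b
  set T : ℝ := Real.pi / (2 * H) with hT
  have hTpos : 0 < T := by positivity
  have hsinT : ∀ t, Real.sin (2 * H * (t + T)) = - Real.sin (2 * H * t) := by
    intro t
    rw [← Real.sin_add_pi]; congr 1; rw [hT]; field_simp
  have hsin2T : ∀ t, Real.sin (2 * H * (t + 2 * T)) = Real.sin (2 * H * t) := by
    intro t
    rw [two_mul T, ← add_assoc, hsinT, hsinT, neg_neg]
  have hF2T : ∀ t, F (t + 2 * T) = F t := fun t => by rw [hF, hF, hsin2T]
  have hper : Function.Periodic h (2 * T) := by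
    intro t
    simp only [hh, hsin2T, hF2T]
  set L : ℝ := ∫ t in (0:ℝ)..(2 * T), h t with hL
  have hLpos : 0 < L := by
    have e1 : L = (∫ t in (0:ℝ)..T, h t) + ∫ t in (0:ℝ)..T, h (t + T) := by
      rw [intervalIntegral.integral_comp_add_right, zero_add, ← two_mul,
        intervalIntegral.integral_add_adjacent_intervals (hint _ _) (hint _ _)]
    have hc' : Continuous fun t => h (t + T) := by fun_prop
    rw [e1, ← intervalIntegral.integral_add (hint _ _) (hc'.intervalIntegrable _ _)]
    refine intervalIntegral.integral_pos hTpos (by fun_prop) (fun t _ => ?_)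
      ⟨0, ⟨le_rfl, hTpos.le⟩, ?_⟩
    · have a := hFpos t
      have b := hFpos (t + T)
      rw [hF] at a b
      rw [hsinT] at b
      have := pair_nonneg B (Real.sin (2 * H * t)) hB0 (Real.neg_one_le_sin _)
        (Real.sin_le_one _) a b
      simpa only [hh, hF, hsinT] using this
    · simp only [hh, hF, hsinT]
      simp only [mul_zero, Real.sin_zero, neg_zero, add_zero]
      positivity
  have hxT : ∀ s, x (s + 2 * T) = x s + L := by
    intro s
    rw [hx, hx, ← intervalIntegral.integral_add_adjacent_intervals (hint 0 s) (hint s _),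
      hper.intervalIntegral_add_eq s 0, zero_add]
  have hxn : ∀ (n : ℕ) s, x (s + n * (2 * T)) = x s + L * n ∧ y (s + n * (2 * T)) = y s := by
    intro n
    induction n with
    | zero => intro s; simp
    | succ n ih =>
      intro s
      have e : s + ((n + 1 : ℕ) : ℝ) * (2 * T) = (s + n * (2 * T)) + 2 * T := by
        push_cast; ring
      rw [e, hxT, (ih s).1]
      refine ⟨by push_cast; ring, ?_⟩
      rw [hy, hF2T, ← hy, (ih s).2]
  have step1 : ∀ a s θ, MvPolynomial.eval ![a, y s * Real.cos θ, y s * Real.sin θ] P = 0 := by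
    intro a s θ
    have := line_zero P ![x s, y s * Real.cos θ, y s * Real.sin θ] ![L, 0, 0]
      (Set.range (fun n : ℕ => (n : ℝ))) (Set.infinite_range_of_injective Nat.cast_injective) ?_
      ((a - x s) / L)
    · convert this using 3
      funext i
      fin_cases i
      · simp; field_simp; ring
      · simp
      · simp
    · rintro _ ⟨n, rfl⟩
      apply hP
      rw [hS]
      refine ⟨s + n * (2 * T), θ, ?_⟩
      rw [(hxn n s).1, (hxn n s).2]
      funext i
      fin_cases i <;> simp
  have hyinf : (Set.range y).Infinite := by
    have hyc : Continuous y := by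
      have : y = fun s => (1 / (2 * H)) * Real.sqrt (F s) := funext hy
      rw [this]; fun_prop
    refine (isPreconnected_range hyc).infinite_of_nontrivial
      ⟨y 0, ⟨0, rfl⟩, y (T / 2), ⟨_, rfl⟩, ne_of_lt ?_⟩
    rw [hy, hy]
    apply mul_lt_mul_of_pos_left _ (by positivity)
    apply Real.sqrt_lt_sqrt (hFpos 0).le
    have e : 2 * H * (T / 2) = Real.pi / 2 := by rw [hT]; field_simp
    rw [hF, hF, e, Real.sin_pi_div_two]
    simp [hB0]
  have step2 : ∀ a r θ, MvPolynomial.eval ![a, r * Real.cos θ, r * Real.sin θ] P = 0 := by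
    intro a r θ
    have := line_zero P ![a, 0, 0] ![0, Real.cos θ, Real.sin θ] (Set.range y) hyinf ?_ r
    · convert this using 3
      funext i
      fin_cases i <;> simp [mul_comm]
    · rintro _ ⟨s, rfl⟩
      convert step1 a s θ using 3
      funext i
      fin_cases i <;> simp [mul_comm]
  apply hP0
  apply MvPolynomial.funext
  intro p
  have := step2 (p 0) ‖(⟨p 1, p 2⟩ : ℂ)‖ (Complex.arg ⟨p 1, p 2⟩)
  rw [Complex.norm_mul_cos_arg, Complex.norm_mul_sin_arg] at this
  rw [map_zero, ← this]
  congr 2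
  funext i
  fin_cases i <;> simp
end

section
/- Let H > 0, B > 0, set F(s) = 1 + B² − 2B·cosh(2Hs), let U = {s ∈ ℝ : F(s) > 0}, and on U define z(s) = (1/(2H))·√(F(s)) and x'(s) = (B·cosh(2Hs) − 1)/√(F(s)). Then for every s ∈ U: 2H·z(s)·x'(s) + (z·z')'(s) + 1 = 0, where (z·z')' is the derivative of the function t ↦ z(t)·z'(t). -/
/-- The generating curve `(x(s), z(s))` of the spacelike CMC surface of
revolution about the spacelike x-axis satisfies `2H·z·x' + (z·z')' + 1 = 0` on
`U = {s | F s > 0}`. -/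
theorem spacelike_generating_curve_cmc_ode_first
    (H B : ℝ) (hH : 0 < H) (hB : 0 < B)
    (F : ℝ → ℝ) (hF : ∀ t, F t = 1 + B ^ 2 - 2 * B * Real.cosh (2 * H * t))
    (U : Set ℝ) (hU : U = {t : ℝ | 0 < F t})
    (z x' : ℝ → ℝ)
    (hz : ∀ t ∈ U, z t = (1 / (2 * H)) * Real.sqrt (F t))
    (hx' : ∀ t ∈ U, x' t = (B * Real.cosh (2 * H * t) - 1) / Real.sqrt (F t)) :
    ∀ s ∈ U, 2 * H * z s * x' s + deriv (fun t => z t * deriv z t) s + 1 = 0 := by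
  have hFd : ∀ t, HasDerivAt F (-(4 * B * H * Real.sinh (2 * H * t))) t := by
    intro t
    have h1 : HasDerivAt (fun t : ℝ => 2 * H * t) (2 * H) t := by
      simpa using (hasDerivAt_id t).const_mul (2 * H)
    have h2 := ((h1.cosh).const_mul (2 * B)).const_sub (1 + B ^ 2)
    have h3 : F = fun t => 1 + B ^ 2 - 2 * B * Real.cosh (2 * H * t) := funext hF
    rw [h3]
    exact h2.congr_deriv (by ring)
  have hFc : Continuous F :=
    continuous_iff_continuousAt.2 fun t => (hFd t).continuousAt
  have hUo : IsOpen U := by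
    rw [hU]
    exact isOpen_lt continuous_const hFc
  have hpos : ∀ t ∈ U, 0 < F t := by
    intro t ht
    rw [hU] at ht
    exact ht
  have hzz : ∀ t ∈ U, z t * deriv z t = -(B / (2 * H)) * Real.sinh (2 * H * t) := by
    intro t ht
    have hp := hpos t ht
    have hs : 0 < Real.sqrt (F t) := Real.sqrt_pos.2 hp
    have h1 := ((hFd t).sqrt hp.ne').const_mul (1 / (2 * H))
    have he : z =ᶠ[nhds t] fun t => (1 / (2 * H)) * Real.sqrt (F t) :=
      Filter.eventuallyEq_of_mem (hUo.mem_nhds ht) hz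
    rw [he.deriv_eq, h1.deriv, hz t ht]
    field_simp
    ring
  intro s hs
  have hp := hpos s hs
  have hsq : 0 < Real.sqrt (F s) := Real.sqrt_pos.2 hp
  have he : (fun t => z t * deriv z t) =ᶠ[nhds s]
      fun t => -(B / (2 * H)) * Real.sinh (2 * H * t) :=
    Filter.eventuallyEq_of_mem (hUo.mem_nhds hs) hzz
  have h1 : HasDerivAt (fun t : ℝ => 2 * H * t) (2 * H) s := by
    simpa using (hasDerivAt_id s).const_mul (2 * H)
  have h2 := (h1.sinh).const_mul (-(B / (2 * H)))
  rw [he.deriv_eq, h2.deriv, hz s hs, hx' s hs]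
  field_simp
  ring
end

section
/- Let H > 0 and B > 1, let s ≥ 0, and set c = (B²−1)/(6B), l = (B²−1) − 2Bc + (B²−1)c² − 2Bc³, m = 2B − 2c(B²−1) + 6Bc², n = 2B. Then ∫_{0}^{s} (B·sinh(2Ht) − 1)/√(B² + 2B·sinh(2Ht) − 1) dt = (1/(2H)) · ∫_{c}^{sinh(2Hs)+c} (B·w − (1 + Bc))/√(l + m·w + n·w³) dw. -/
/-- The substitutions `u = sinh(2Ht)` and `w = u + c` express the
z-coordinate of the generating curve of a spacelike CMC surface of revolution about
the timelike axis as an integral against the depressed cubic `l + mw + nw³`. -/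
theorem z_coordinate_substitution_depressed
    (H B : ℝ) (hH : 0 < H) (hB : 1 < B) (s : ℝ) (hs : 0 ≤ s)
    (c l m n : ℝ)
    (hc : c = (B ^ 2 - 1) / (6 * B))
    (hl : l = (B ^ 2 - 1) - 2 * B * c + (B ^ 2 - 1) * c ^ 2 - 2 * B * c ^ 3)
    (hm : m = 2 * B - 2 * c * (B ^ 2 - 1) + 6 * B * c ^ 2)
    (hn : n = 2 * B) :
    (∫ t in (0:ℝ)..s, (B * Real.sinh (2 * H * t) - 1)
        / Real.sqrt (B ^ 2 + 2 * B * Real.sinh (2 * H * t) - 1))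
      = (1 / (2 * H)) * ∫ w in c..(Real.sinh (2 * H * s) + c),
          (B * w - (1 + B * c)) / Real.sqrt (l + m * w + n * w ^ 3) := by
  have hB0 : B ≠ 0 := by linarith
  have h6 : B ^ 2 - 1 = 6 * B * c := by rw [hc]; field_simp
  have hd : ∀ x : ℝ, HasDerivAt (fun t : ℝ => Real.sinh (2 * H * t) + c)
      (Real.cosh (2 * H * x) * (2 * H)) x := by
    intro x
    have h1 : HasDerivAt (fun t : ℝ => 2 * H * t) (2 * H) x := by
      simpa using (hasDerivAt_id x).const_mul (2 * H)
    exact (h1.sinh).add_const c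
  have key := intervalIntegral.integral_comp_mul_deriv_of_deriv_nonneg (a := 0) (b := s)
    (f := fun t : ℝ => Real.sinh (2 * H * t) + c)
    (f' := fun t : ℝ => Real.cosh (2 * H * t) * (2 * H))
    (g := fun w : ℝ => (B * w - (1 + B * c)) / Real.sqrt (l + m * w + n * w ^ 3))
    (fun x _ => (hd x).continuousAt.continuousWithinAt)
    (fun x _ => hd x)
    (fun x _ => mul_nonneg (Real.cosh_pos _).le (by linarith))
  simp only [mul_zero, Real.sinh_zero, zero_add] at key
  rw [← key, ← intervalIntegral.integral_const_mul]
  congr 1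
  funext t
  simp only [Function.comp]
  have hcs := Real.cosh_sq (2 * H * t)
  have hcp := Real.cosh_pos (2 * H * t)
  set u := Real.sinh (2 * H * t)
  set v := Real.cosh (2 * H * t)
  have hcub : l + m * (u + c) + n * (u + c) ^ 3 = (B ^ 2 + 2 * B * u - 1) * v ^ 2 := by
    rw [hcs, hl, hm, hn]
    linear_combination (-(u + c) ^ 2) * h6
  rw [hcub, Real.sqrt_mul' _ (sq_nonneg v), Real.sqrt_sq hcp.le]
  have hv : v ≠ 0 := hcp.ne'
  have hH' : H ≠ 0 := hH.ne'
  have e : B * (u + c) - (1 + B * c) = B * u - 1 := by ring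
  rw [e]
  by_cases hA : Real.sqrt (B ^ 2 + 2 * B * u - 1) = 0
  · simp [hA]
  · field_simp
end

section
/- Let c ≠ 0 be a real number. Then there is no nonzero real polynomial P in two variables such that P(x, c·cos(x/c)) = 0 for every x ∈ ℝ; that is, the plane curve {(x, c·cos(x/c)) : x ∈ ℝ} is not algebraic. -/
/-- The generating curve `z = c·cos(x/c)` of the maximal spacelike
surface of revolution in `E₁³` is not an algebraic plane curve. -/
theorem catenary_type_curve_not_algebraic (c : ℝ) (hc : c ≠ 0) :
    ¬ ∃ P : MvPolynomial (Fin 2) ℝ, P ≠ 0 ∧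
      ∀ x : ℝ, MvPolynomial.eval ![x, c * Real.cos (x / c)] P = 0 := by
  rintro ⟨P, hP, h⟩
  apply hP
  have key : ∀ x y : ℝ, MvPolynomial.eval ![x, c * Real.cos y] P = 0 := by
    intro x y
    let Q : Polynomial ℝ :=
      MvPolynomial.aeval ![Polynomial.X, Polynomial.C (c * Real.cos y)] P
    have hQ : ∀ u : ℝ, Q.eval u = MvPolynomial.eval ![u, c * Real.cos y] P := by
      intro u
      have h1 : (Polynomial.aeval u) Q = MvPolynomial.aeval ![u, c * Real.cos y] P := by
        change (Polynomial.aeval u) (MvPolynomial.aeval _ P) = _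
        rw [← AlgHom.comp_apply]
        congr 1
        ext i
        fin_cases i <;> simp
      simpa [Polynomial.coe_aeval_eq_eval, MvPolynomial.coe_aeval_eq_eval] using h1
    have h0 : Q = 0 := by
      apply Polynomial.eq_zero_of_infinite_isRoot
      have hinj : Function.Injective (fun n : ℕ => c * (y + n * (2 * Real.pi))) := by
        intro m n hmn
        have h2 := mul_left_cancel₀ hc hmn
        have h3 : (m : ℝ) * (2 * Real.pi) = n * (2 * Real.pi) := by linarith
        have h4 := mul_right_cancel₀ (by positivity) h3
        exact_mod_cast h4
      refine (Set.infinite_range_of_injective hinj).mono ?_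
      rintro _ ⟨n, rfl⟩
      have := h (c * (y + n * (2 * Real.pi)))
      rw [mul_div_cancel_left₀ _ hc, Real.cos_add_nat_mul_two_pi] at this
      change Q.eval _ = 0
      rw [hQ, this]
    rw [← hQ, h0, Polynomial.eval_zero]
  have hinf : (Set.range (fun y : ℝ => c * Real.cos y)).Infinite := by
    have : Set.range (fun y : ℝ => c * Real.cos y) = (fun z => c * z) '' Set.Icc (-1) 1 := by
      rw [← Real.range_cos, ← Set.range_comp]; rfl
    rw [this]
    exact (Set.Icc_infinite (by norm_num)).image (mul_right_injective₀ hc).injOn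
  apply MvPolynomial.funext_set ![Set.univ, Set.range (fun y : ℝ => c * Real.cos y)]
  · intro i
    fin_cases i
    · exact Set.infinite_univ
    · exact hinf
  · intro v hv
    obtain ⟨y, hy⟩ := hv 1 (Set.mem_univ _)
    have : v = ![v 0, c * Real.cos y] := by
      ext i
      fin_cases i
      · rfl
      · exact hy.symm
    rw [this, key, map_zero]
end
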